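/- arXiv:math/0410282 — 4 statements merged into one kernel-verified Lean document; each statement's English description precedes it below -/
import Mathlib

section
/- Let f : {−1,1}^n → {−1,1} be any Boolean function and let A be any randomized decision-tree algorithm on n bits with revealment δ. Then for x uniform on {−1,1}^n, Pr[A's output on x differs from f(x)] ≥ (1/8)·Var(f) − (1/4)·n·δ², where the probability is over x and the algorithm's randomness. In particular, if f is balanced and the error probability is small, then δ ≥ Ω(n^{-1/2}). -/
/-- A deterministic decision tree on `n` bits: a leaf outputs a Boolean value, an
internal node queries a bit and branches on its value. -/
inductive DTree (n : ℕ) : Type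
  | leaf : Bool → DTree n
  | node : Fin n → DTree n → DTree n → DTree n

namespace DTree

/-- The output of a decision tree on input `x`. -/
def eval {n : ℕ} : DTree n → (Fin n → Bool) → Bool
  | .leaf b, _ => b
  | .node i t0 t1, x => if x i then t1.eval x else t0.eval x

/-- Whether the decision tree reads bit `j` when run on input `x`. -/
def readsBit {n : ℕ} : DTree n → (Fin n → Bool) → Fin n → Bool
  | .leaf _, _, _ => false
  | .node i t0 t1, x, j =>
      (i == j) || (if x i then t1.readsBit x j else t0.readsBit x j)

end DTree

/-- A randomized decision-tree algorithm: a (finitely supported) probability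
distribution over deterministic decision trees. -/
structure RandAlg (n : ℕ) where
  m : ℕ
  tree : Fin m → DTree n
  w : Fin m → ℝ
  w_nonneg : ∀ r, 0 ≤ w r
  w_sum : ∑ r, w r = 1

/-- `readProb A i` is the probability δ_i that bit `i` is read, over a uniformly
random input and the internal randomness of the algorithm. -/
noncomputable def readProb {n : ℕ} (A : RandAlg n) (i : Fin n) : ℝ :=
  (∑ r, ∑ x : Fin n → Bool, if (A.tree r).readsBit x i then A.w r else 0) / 2 ^ n

/-- The probability that the algorithm's output differs from `f`, over a uniformly
random input and the internal randomness of the algorithm. -/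
noncomputable def errProb {n : ℕ} (A : RandAlg n) (f : (Fin n → Bool) → Bool) : ℝ :=
  (∑ r, ∑ x : Fin n → Bool, if (A.tree r).eval x ≠ f x then A.w r else 0) / 2 ^ n

/-- A Boolean function is balanced if it takes the value `true` on exactly half
of all inputs. -/
def balanced {n : ℕ} (f : (Fin n → Bool) → Bool) : Prop :=
  2 * Nat.card {x : Fin n → Bool // f x = true} = 2 ^ n

/-- A Boolean function is monotone if it is order preserving coordinatewise. -/
def monotoneBF {n : ℕ} (f : (Fin n → Bool) → Bool) : Prop :=
  ∀ x y : Fin n → Bool, (∀ i, x i ≤ y i) → f x ≤ f y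

/-- The ±1 encoding of a Boolean value. -/
noncomputable def pm (b : Bool) : ℝ := if b then 1 else -1

/-- The variance of the ±1-valued function corresponding to `f`, for a uniformly
random input. -/
noncomputable def pmVar {n : ℕ} (f : (Fin n → Bool) → Bool) : ℝ :=
  (∑ x : Fin n → Bool, pm (f x) ^ 2) / 2 ^ n
    - ((∑ x : Fin n → Bool, pm (f x)) / 2 ^ n) ^ 2

/-!
Run two independent copies of the algorithm on independent uniform inputs `x` and `y`, and let `z`
agree with `x` on the bits read by the first copy and with `y` on all others. Then `z` is uniform.
The expected number of bits read by both copies is `∑ i, δ_i ^ 2`. If there is no such bit, the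
copies output on `z` what they output on `x` and `y`, two independent values; whenever these differ,
one of the copies errs on `z`. Hence `(1 - b ^ 2) / 2 ≤ 2 * err + ∑ i, δ_i ^ 2`, where `b` is the
expected output. Finally `b` is within `2 * err` of the expectation of `f`, so `b ^ 2` exceeds
`1 - Var f` by at most `4 * err`.
-/

open scoped BigOperators

section Cube

variable {n : ℕ} (f : (Fin n → Bool) → Bool)

lemma expect_cube_eq_sum_div (g : (Fin n → Bool) → ℝ) : 𝔼 x, g x = (∑ x, g x) / 2 ^ n := by
  simp [Fintype.expect_eq_sum_div_card]

lemma pm_sq (b : Bool) : pm b ^ 2 = 1 := by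
  cases b <;> norm_num [pm]

lemma abs_pm (b : Bool) : |pm b| = 1 := by
  cases b <;> norm_num [pm]

lemma abs_pm_sub_pm (b c : Bool) : |pm b - pm c| = 2 * if b ≠ c then 1 else 0 := by
  cases b <;> cases c <;> norm_num [pm]

lemma one_sub_pm_mul_pm_le (b c d : Bool) :
    1 - pm b * pm c ≤ 2 * ((if b ≠ d then 1 else 0) + if c ≠ d then 1 else 0) := by
  cases b <;> cases c <;> cases d <;> norm_num [pm]

lemma one_sub_pm_mul_pm_le_two (b c : Bool) : 1 - pm b * pm c ≤ 2 := by
  cases b <;> cases c <;> norm_num [pm]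

lemma abs_expect_pm_le_one : |𝔼 x, pm (f x)| ≤ 1 :=
  (Finset.abs_expect_le _ _).trans <| by simp [abs_pm]

lemma pmVar_eq_one_sub : pmVar f = 1 - (𝔼 x, pm (f x)) ^ 2 := by
  simp [pmVar, expect_cube_eq_sum_div, pm_sq]

end Cube

namespace DTree

variable {n : ℕ} (t s : DTree n) (f : (Fin n → Bool) → Bool) {x y z : Fin n → Bool}

/-- The probability that the decision tree reads bit `i` on a uniform input. -/
noncomputable def readProb (i : Fin n) : ℝ := 𝔼 x, if t.readsBit x i then 1 else 0

/-- The probability that the output of the decision tree differs from `f` on a uniform input. -/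
noncomputable def errProb : ℝ := 𝔼 x, if t.eval x ≠ f x then 1 else 0

/-- The expectation of the `±1`-valued output of the decision tree on a uniform input. -/
noncomputable def bias : ℝ := 𝔼 x, pm (t.eval x)

/-- The input agreeing with `x` on the bits that the decision tree reads on `x`, and with `y` on all
other bits. -/
def resample (x y : Fin n → Bool) : Fin n → Bool :=
  fun i => if t.readsBit x i then x i else y i

variable {t} in
lemma eval_congr (h : ∀ i, t.readsBit x i → z i = x i) : t.eval z = t.eval x := by
  induction t with
  | leaf b => rfl
  | node i t₀ t₁ ih₀ ih₁ =>
    have : z i = x i := h i (by simp [readsBit])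
    cases hx : x i <;> simp_all [eval, readsBit]

variable {t} in
lemma readsBit_congr (h : ∀ i, t.readsBit x i → z i = x i) : t.readsBit z = t.readsBit x := by
  induction t with
  | leaf b => rfl
  | node i t₀ t₁ ih₀ ih₁ =>
    have : z i = x i := h i (by simp [readsBit])
    funext j
    cases hx : x i <;> simp_all [readsBit]

lemma eval_resample (x y : Fin n → Bool) : t.eval (t.resample x y) = t.eval x :=
  eval_congr fun i hi => by simp [resample, hi]

lemma readsBit_resample (x y : Fin n → Bool) :
    t.readsBit (t.resample x y) = t.readsBit x :=
  readsBit_congr fun i hi => by simp [resample, hi]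

variable {t s} in
lemma eval_resample_of_disjoint (h : ∀ i, s.readsBit y i → ¬t.readsBit x i) :
    s.eval (t.resample x y) = s.eval y :=
  eval_congr fun i hi => by simp [resample, h i hi]

/-- Exchanges the bits of `x` and `y` that the decision tree does not read on `x`. -/
def swapUnread (p : (Fin n → Bool) × (Fin n → Bool)) : (Fin n → Bool) × (Fin n → Bool) :=
  (t.resample p.1 p.2, fun i => if t.readsBit p.1 i then p.2 i else p.1 i)

-- The swap does not change which bits are read, so a second swap exchanges the same bits again.
lemma swapUnread_involutive : Function.Involutive t.swapUnread := by
  rintro ⟨x, y⟩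
  ext i <;> by_cases hi : t.readsBit x i <;>
    simp [swapUnread, resample, readsBit_resample, hi]

lemma expect_expect_resample (g : (Fin n → Bool) → ℝ) :
    𝔼 x, 𝔼 y, g (t.resample x y) = 𝔼 z, g z :=
  calc 𝔼 x, 𝔼 y, g (t.resample x y)
      = 𝔼 p : (Fin n → Bool) × (Fin n → Bool), g (t.swapUnread p).1 :=
        (Finset.expect_product' _ _ fun x y => g (t.resample x y)).symm
    _ = 𝔼 p : (Fin n → Bool) × (Fin n → Bool), g p.1 :=
        Fintype.expect_bijective _ t.swapUnread_involutive.bijective _ _ fun _ => rfl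
    _ = 𝔼 z, 𝔼 _y : Fin n → Bool, g z := Finset.expect_product' _ _ fun z _ => g z
    _ = 𝔼 z, g z := by simp only [Fintype.expect_const]

lemma one_sub_pm_eval_mul_pm_eval_le (x y : Fin n → Bool) :
    1 - pm (t.eval x) * pm (s.eval y) ≤
      2 * ((if t.eval (t.resample x y) ≠ f (t.resample x y) then 1 else 0)
        + (if s.eval (t.resample x y) ≠ f (t.resample x y) then 1 else 0)
        + ∑ i, (if t.readsBit x i then 1 else 0) * if s.readsBit y i then 1 else 0) := by
  have common_nonneg (i : Fin n) :
      (0 : ℝ) ≤ (if t.readsBit x i then 1 else 0) * if s.readsBit y i then 1 else 0 := by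
    positivity
  by_cases h : ∀ i, s.readsBit y i → ¬t.readsBit x i
  · rw [eval_resample, eval_resample_of_disjoint h]
    have := one_sub_pm_mul_pm_le (t.eval x) (s.eval y) (f (t.resample x y))
    have := Finset.sum_nonneg fun i (_ : i ∈ Finset.univ) => common_nonneg i
    linarith
  · push Not at h
    obtain ⟨i, hs, ht⟩ := h
    refine (one_sub_pm_mul_pm_le_two _ _).trans (le_mul_of_one_le_right zero_le_two ?_)
    have := Finset.single_le_sum (fun i _ => common_nonneg i) (Finset.mem_univ i)
    rw [if_pos hs, if_pos ht, mul_one] at this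
    exact this.trans (le_add_of_nonneg_left (by positivity))

lemma sum_readProb_mul_readProb :
    ∑ i, t.readProb i * s.readProb i =
      𝔼 x, 𝔼 y, ∑ i, (if t.readsBit x i then 1 else 0) * if s.readsBit y i then 1 else 0 := by
  simp only [readProb, Fintype.expect_mul_expect, Finset.expect_sum_comm]

lemma one_sub_bias_mul_bias_le :
    1 - t.bias * s.bias ≤
      2 * (t.errProb f + s.errProb f + ∑ i, t.readProb i * s.readProb i) := by
  calc 1 - t.bias * s.bias
      = 𝔼 x, 𝔼 y, (1 - pm (t.eval x) * pm (s.eval y)) := by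
        simp only [bias, Fintype.expect_mul_expect, Finset.expect_sub_distrib,
          Fintype.expect_const]
    _ ≤ _ := Finset.expect_le_expect fun x _ => Finset.expect_le_expect fun y _ =>
        t.one_sub_pm_eval_mul_pm_eval_le s f x y
    _ = 2 * (t.errProb f + s.errProb f + ∑ i, t.readProb i * s.readProb i) := by
        simp only [← Finset.mul_expect, Finset.expect_add_distrib, sum_readProb_mul_readProb,
          t.expect_expect_resample fun z => if t.eval z ≠ f z then 1 else 0,
          t.expect_expect_resample fun z => if s.eval z ≠ f z then 1 else 0, errProb]

lemma abs_bias_le_one : |t.bias| ≤ 1 := abs_expect_pm_le_one t.eval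

lemma abs_bias_sub_le : |t.bias - 𝔼 x, pm (f x)| ≤ 2 * t.errProb f := by
  rw [bias, errProb, ← Finset.expect_sub_distrib, Finset.mul_expect]
  exact (Finset.abs_expect_le _ _).trans_eq <| by simp only [abs_pm_sub_pm]

lemma readProb_nonneg (i : Fin n) : 0 ≤ t.readProb i :=
  Finset.expect_nonneg fun _ _ => by positivity

end DTree

namespace RandAlg

variable {n : ℕ} (A B : RandAlg n) (f : (Fin n → Bool) → Bool) {φ ψ : DTree n → ℝ}

/-- The expectation of `φ t` for a decision tree `t` drawn from the algorithm. -/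
noncomputable def mean (φ : DTree n → ℝ) : ℝ := ∑ r, A.w r * φ (A.tree r)

/-- The expectation of the `±1`-valued output of the algorithm on a uniform input. -/
noncomputable def bias : ℝ := A.mean DTree.bias

lemma mean_const (c : ℝ) : A.mean (fun _ => c) = c := by
  rw [mean, ← Finset.sum_mul, A.w_sum, one_mul]

lemma mean_add (φ ψ : DTree n → ℝ) : A.mean (fun t => φ t + ψ t) = A.mean φ + A.mean ψ := by
  simp only [mean, mul_add, Finset.sum_add_distrib]

lemma mean_sub (φ ψ : DTree n → ℝ) : A.mean (fun t => φ t - ψ t) = A.mean φ - A.mean ψ := by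
  simp only [mean, mul_sub, Finset.sum_sub_distrib]

lemma mul_mean (c : ℝ) (φ : DTree n → ℝ) : c * A.mean φ = A.mean fun t => c * φ t := by
  simp only [mean, Finset.mul_sum, mul_left_comm]

lemma mean_mul (φ : DTree n → ℝ) (c : ℝ) : A.mean φ * c = A.mean fun t => φ t * c := by
  simp only [mean, Finset.sum_mul, mul_assoc]

lemma mean_sum {ι : Type*} (u : Finset ι) (φ : ι → DTree n → ℝ) :
    A.mean (fun t => ∑ i ∈ u, φ i t) = ∑ i ∈ u, A.mean (φ i) := by
  simp only [mean, Finset.mul_sum]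
  exact Finset.sum_comm

lemma mean_mono (h : ∀ t, φ t ≤ ψ t) : A.mean φ ≤ A.mean ψ :=
  Finset.sum_le_sum fun r _ => mul_le_mul_of_nonneg_left (h _) (A.w_nonneg r)

lemma abs_mean_le (φ : DTree n → ℝ) : |A.mean φ| ≤ A.mean fun t => |φ t| :=
  (Finset.abs_sum_le_sum_abs _ _).trans_eq <| by
    simp only [abs_mul, abs_of_nonneg (A.w_nonneg _), mean]

lemma readProb_eq_mean (i : Fin n) : readProb A i = A.mean fun t => t.readProb i := by
  simp only [readProb, mean, DTree.readProb, expect_cube_eq_sum_div, mul_div_assoc',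
    Finset.mul_sum, mul_ite, mul_one, mul_zero, Finset.sum_div]

lemma errProb_eq_mean : errProb A f = A.mean fun t => t.errProb f := by
  simp only [errProb, mean, DTree.errProb, expect_cube_eq_sum_div, mul_div_assoc',
    Finset.mul_sum, mul_ite, mul_one, mul_zero, Finset.sum_div]

lemma readProb_nonneg (i : Fin n) : 0 ≤ readProb A i :=
  calc 0 = A.mean fun _ => 0 := (A.mean_const 0).symm
    _ ≤ A.mean fun t => t.readProb i := A.mean_mono fun t => t.readProb_nonneg i
    _ = readProb A i := (A.readProb_eq_mean i).symm

lemma one_sub_bias_mul_bias_le :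
    1 - A.bias * B.bias ≤
      2 * (errProb A f + errProb B f + ∑ i, readProb A i * readProb B i) := by
  calc 1 - A.bias * B.bias
      = A.mean fun t => B.mean fun s => 1 - t.bias * s.bias := by
        simp only [bias, mean_sub, mean_const, ← mul_mean, ← mean_mul]
    _ ≤ A.mean fun t => B.mean fun s =>
          2 * (t.errProb f + s.errProb f + ∑ i, t.readProb i * s.readProb i) :=
        A.mean_mono fun t => B.mean_mono fun s => t.one_sub_bias_mul_bias_le s f
    _ = 2 * (errProb A f + errProb B f + ∑ i, readProb A i * readProb B i) := by
        simp only [errProb_eq_mean, readProb_eq_mean, mean_add, mean_sum, mean_const, ← mul_mean,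
          ← mean_mul]

lemma abs_bias_le_one : |A.bias| ≤ 1 :=
  calc |A.bias| ≤ A.mean fun t => |t.bias| := A.abs_mean_le _
    _ ≤ A.mean fun _ => 1 := A.mean_mono DTree.abs_bias_le_one
    _ = 1 := A.mean_const 1

lemma abs_bias_sub_le : |A.bias - 𝔼 x, pm (f x)| ≤ 2 * errProb A f :=
  calc |A.bias - 𝔼 x, pm (f x)|
      = |A.mean fun t => t.bias - 𝔼 x, pm (f x)| := by rw [mean_sub, mean_const, bias]
    _ ≤ A.mean fun t => |t.bias - 𝔼 x, pm (f x)| := A.abs_mean_le _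
    _ ≤ A.mean fun t => 2 * t.errProb f := A.mean_mono fun t => t.abs_bias_sub_le f
    _ = 2 * errProb A f := by rw [errProb_eq_mean, mul_mean]

lemma bias_sq_sub_sq_le : A.bias ^ 2 - (𝔼 x, pm (f x)) ^ 2 ≤ 4 * errProb A f := by
  set μ := 𝔼 x, pm (f x)
  have sum_le : |A.bias + μ| ≤ 2 :=
    (abs_add_le _ _).trans (by linarith [A.abs_bias_le_one, abs_expect_pm_le_one f])
  calc A.bias ^ 2 - μ ^ 2 = (A.bias + μ) * (A.bias - μ) := sq_sub_sq _ _
    _ ≤ |A.bias + μ| * |A.bias - μ| := (le_abs_self _).trans_eq (abs_mul _ _)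
    _ ≤ 2 * (2 * errProb A f) :=
        mul_le_mul sum_le (A.abs_bias_sub_le f) (abs_nonneg _) zero_le_two
    _ = 4 * errProb A f := by ring

end RandAlg

theorem statement4_general {n : ℕ} (f : (Fin n → Bool) → Bool) (A : RandAlg n) :
    (1 / 8) * pmVar f - (1 / 4) * ∑ i, readProb A i ^ 2 ≤ errProb A f := by
  have independent_copies := A.one_sub_bias_mul_bias_le A f
  have bias_close := A.bias_sq_sub_sq_le f
  simp only [← sq] at independent_copies
  rw [pmVar_eq_one_sub]
  linarith

/-- For any Boolean function `f` on `n` bits and any randomized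
decision-tree algorithm with revealment `δ` (i.e. every bit is read with
probability at most `δ`), the error probability on a uniformly random input is
at least `(1/8)·Var(f) − (1/4)·n·δ²`.  In particular, if `f` is balanced and the
error probability is small, then `δ ≥ Ω(n^(-1/2))`. -/
theorem statement4 (n : ℕ) (f : (Fin n → Bool) → Bool) (A : RandAlg n)
    (δ : ℝ) (hδ0 : 0 ≤ δ) (hδ : ∀ i, readProb A i ≤ δ) :
    (1 / 8) * pmVar f - (1 / 4) * n * δ ^ 2 ≤ errProb A f := by
  have sum_sq_le : ∑ i, readProb A i ^ 2 ≤ n * δ ^ 2 := by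
    simpa using Finset.sum_le_card_nsmul Finset.univ _ _ fun i _ =>
      pow_le_pow_left₀ (A.readProb_nonneg i) (hδ i) 2
  linarith [statement4_general f A]
end

section
/- Let H = 2^d and W > d. In the nonmonotone ensemble on the wrapped extended butterfly Ω_{H,W}, let f be the Boolean function of the H·W input bits defined as follows: among the vertices of time slice 0 that lie on a directed cycle of the random out-degree-one subgraph, take the lexicographically smallest one and output its input bit. Then f is exactly balanced: Pr[f = 1] = 1/2 for uniform input bits. -/
/-- The step map of the random out-degree-one subgraph of the wrapped extended
butterfly `Ω_{H,W}` in the nonmonotone ensemble: the vertex `(h, t)` moves to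
`(2h + β(h,t), t + 1)`, where the input bit `β(h,t)` selects which of the two
outgoing edges is kept (it is the parity of the first coordinate of the
destination). -/
def bstep (H W : ℕ) (β : ZMod H × ZMod W → Bool) (v : ZMod H × ZMod W) :
    ZMod H × ZMod W :=
  (2 * v.1 + (if β v then 1 else 0), v.2 + 1)

/-- A point lies on a directed cycle of the functional graph of `g` iff it is
periodic. -/
def onCycle {α : Type*} (g : α → α) (v : α) : Prop := ∃ k, 0 < k ∧ g^[k] v = v

/-- The Boolean function of the nonmonotone ensemble: among the vertices of time
slice 0 lying on a directed cycle of the out-degree-one random subgraph, take the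
lexicographically smallest one (the one with smallest height) and output its
input bit.  (A cycle always crosses every time slice, so the infimum below is
attained; the junk value for the empty set is never used.) -/
noncomputable def lexCycleBit (H W : ℕ) (β : ZMod H × ZMod W → Bool) : Bool :=
  β (((sInf {k : ℕ | onCycle (bstep H W β) ((k : ZMod H), (0 : ZMod W))} : ℕ) :
      ZMod H), (0 : ZMod W))

/-!
XOR-ing all heights of slice `t` with a mask `c t` is an involution of the vertices that preserves
slices. It carries the subgraph selected by `β` to the one selected by a twisted input, as long as
`c (t + 1) = 2 * c t + e t` in `d` bits, where `e t` says whether the input bits of slice `t` are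
complemented. Complementing slice `0` alone produces the masks `0, 1, 2, 4, …`: the flipped bit
moves one place up at each step and, since `d < W`, has dropped out of the `d`-bit height before the
walk returns to slice `0`. So slice `0` is fixed pointwise, the set of its vertices on cycles does
not change, and the bit of any vertex chosen from that set is complemented.
-/

theorem two_mul_natCard_eq_true_of_flip {α : Type*} (σ : α ≃ α) {f : α → Bool}
    (hf : ∀ a, f (σ a) = !f a) : 2 * Nat.card {a // f a = true} = Nat.card α := by
  have halves : {a // f a = true} ≃ {a // ¬f a = true} := σ.subtypeEquiv fun a ↦ by simp [hf]
  have split : Bool × {a // f a = true} ≃ α :=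
    (Equiv.boolProdEquivSum _).trans
      (((Equiv.refl _).sumCongr halves).trans (Equiv.sumCompl (f · = true)))
  simpa using Nat.card_congr split

theorem onCycle_apply_iff_of_semiconj {α β : Type*} {φ : α → β} {f : α → α} {g : β → β}
    (h : Function.Semiconj φ f g) (hφ : Function.Injective φ) (v : α) :
    onCycle g (φ v) ↔ onCycle f v := by
  simp only [onCycle, ← (h.iterate_right _).eq, hφ.eq_iff]

theorem two_mul_add_xor_two_mul_add (n m : ℕ) (b e : Bool) :
    (2 * n + b.toNat) ^^^ (2 * m + e.toNat) = 2 * (n ^^^ m) + (b ^^ e).toNat := by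
  simpa only [Nat.bit_val] using Nat.xor_bit b n e m

section XorHeight

variable {d : ℕ}

/-- Bitwise XOR with the mask `m` on heights, which are residues modulo `2 ^ d` read as `d`-bit
strings; the bits of `m` from position `d` on are ignored. -/
def xorHeight (m : ℕ) (h : ZMod (2 ^ d)) : ZMod (2 ^ d) := ((h.val ^^^ m : ℕ) : ZMod (2 ^ d))

theorem xorHeight_natCast (m n : ℕ) :
    xorHeight m (n : ZMod (2 ^ d)) = ((n ^^^ m : ℕ) : ZMod (2 ^ d)) := by
  rw [xorHeight, ZMod.natCast_eq_natCast_iff', ZMod.val_natCast, Nat.xor_mod_two_pow,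
    Nat.xor_mod_two_pow, Nat.mod_mod]

theorem xorHeight_zero (h : ZMod (2 ^ d)) : xorHeight 0 h = h := by
  simp [xorHeight]

theorem xorHeight_involutive (m : ℕ) :
    Function.Involutive (xorHeight m : ZMod (2 ^ d) → ZMod (2 ^ d)) := by
  intro h
  obtain ⟨n, rfl⟩ := ZMod.natCast_zmod_surjective h
  rw [xorHeight_natCast, xorHeight_natCast, Nat.xor_xor_cancel_right]

theorem xorHeight_congr {m m' : ℕ} (hm : m ≡ m' [MOD 2 ^ d]) (h : ZMod (2 ^ d)) :
    xorHeight m h = xorHeight m' h := by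
  rw [xorHeight, xorHeight, ZMod.natCast_eq_natCast_iff', Nat.xor_mod_two_pow, hm,
    ← Nat.xor_mod_two_pow]

theorem xorHeight_two_mul_add (m : ℕ) (b e : Bool) (h : ZMod (2 ^ d)) :
    xorHeight (2 * m + e.toNat) (2 * h + if b then 1 else 0) =
      2 * xorHeight m h + if b ^^ e then 1 else 0 := by
  obtain ⟨n, rfl⟩ := ZMod.natCast_zmod_surjective h
  have toNat_cast (b : Bool) : (if b then 1 else 0 : ZMod (2 ^ d)) = (b.toNat : ℕ) := by
    cases b <;> simp
  have two_mul_add_cast (k : ℕ) (b : Bool) :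
      2 * (k : ZMod (2 ^ d)) + (b.toNat : ℕ) = ((2 * k + b.toNat : ℕ) : ZMod (2 ^ d)) := by
    push_cast; rfl
  rw [toNat_cast, toNat_cast, two_mul_add_cast, xorHeight_natCast, xorHeight_natCast,
    two_mul_add_cast, two_mul_add_xor_two_mul_add]

end XorHeight

section XorSlices

variable {d W : ℕ} (c : ZMod W → ℕ) (e : ZMod W → Bool)

/-- The vertex map that XORs every height in slice `t` with the mask `c t`. -/
def xorSlices (v : ZMod (2 ^ d) × ZMod W) : ZMod (2 ^ d) × ZMod W :=
  (xorHeight (c v.2) v.1, v.2)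

/-- The input `β` transported along `xorSlices c`, with the bits of slice `t` complemented
when `e t` is true. -/
def xorTwist (β : ZMod (2 ^ d) × ZMod W → Bool) (v : ZMod (2 ^ d) × ZMod W) : Bool :=
  β (xorSlices c v) ^^ e v.2

theorem xorSlices_involutive :
    Function.Involutive (xorSlices c : ZMod (2 ^ d) × ZMod W → ZMod (2 ^ d) × ZMod W) :=
  fun v ↦ Prod.ext (xorHeight_involutive (c v.2) v.1) rfl

theorem xorTwist_involutive :
    Function.Involutive (xorTwist (d := d) c e) := by
  intro β
  funext v
  change (β (xorSlices c (xorSlices c v)) ^^ e v.2 ^^ e v.2) = β v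
  rw [xorSlices_involutive c v, Bool.xor_assoc, Bool.xor_self, Bool.xor_false]

variable {c e}

theorem xorSlices_eq_self {t : ZMod W} (ht : c t = 0) (h : ZMod (2 ^ d)) :
    xorSlices c (h, t) = (h, t) := by
  rw [xorSlices, ht, xorHeight_zero]

theorem xorSlices_semiconj_bstep (hc : ∀ t, c (t + 1) ≡ 2 * c t + (e t).toNat [MOD 2 ^ d])
    (β : ZMod (2 ^ d) × ZMod W → Bool) :
    Function.Semiconj (xorSlices c) (bstep (2 ^ d) W β) (bstep (2 ^ d) W (xorTwist c e β)) := by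
  intro v
  refine Prod.ext ?_ rfl
  change xorHeight (c (v.2 + 1)) (2 * v.1 + if β v then 1 else 0) =
    2 * xorHeight (c v.2) v.1 + if β (xorSlices c (xorSlices c v)) ^^ e v.2 then 1 else 0
  rw [xorSlices_involutive c v, xorHeight_congr (hc v.2), xorHeight_two_mul_add]

theorem onCycle_bstep_xorTwist_iff (hc : ∀ t, c (t + 1) ≡ 2 * c t + (e t).toNat [MOD 2 ^ d])
    {t : ZMod W} (ht : c t = 0) (β : ZMod (2 ^ d) × ZMod W → Bool) (h : ZMod (2 ^ d)) :
    onCycle (bstep (2 ^ d) W (xorTwist c e β)) (h, t) ↔ onCycle (bstep (2 ^ d) W β) (h, t) := by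
  simpa only [xorSlices_eq_self ht] using onCycle_apply_iff_of_semiconj
    (xorSlices_semiconj_bstep hc β) (xorSlices_involutive c).injective (h, t)

end XorSlices

/-- The masks propagating a flip of the bits of slice `0`: `0, 1, 2, 4, …`. Truncated division
gives the value `0` at `t = 0`. -/
def shiftMask {W : ℕ} (t : ZMod W) : ℕ := 2 ^ t.val / 2

theorem shiftMask_zero {W : ℕ} : shiftMask (0 : ZMod W) = 0 := by
  simp [shiftMask]

theorem two_mul_shiftMask_add {W : ℕ} [NeZero W] (t : ZMod W) :
    2 * shiftMask t + (decide (t = 0)).toNat = 2 ^ t.val := by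
  by_cases ht : t = 0
  · simp [ht, shiftMask_zero]
  · have even_pow : 2 ∣ 2 ^ t.val := dvd_pow_self 2 ((ZMod.val_ne_zero t).mpr ht)
    simp [ht, shiftMask, Nat.mul_div_cancel' even_pow]

theorem shiftMask_add_one_modEq {d W : ℕ} (hW : d < W) (t : ZMod W) :
    shiftMask (t + 1) ≡ 2 * shiftMask t + (decide (t = 0)).toNat [MOD 2 ^ d] := by
  have : NeZero W := ⟨by omega⟩
  rw [two_mul_shiftMask_add]
  rcases (Nat.succ_le_of_lt t.val_lt).lt_or_eq with no_wrap | wrap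
  · have val_succ : (t + 1).val = t.val + 1 := by
      simpa using ZMod.val_cast_of_lt no_wrap
    rw [shiftMask, val_succ, pow_succ, Nat.mul_div_cancel _ two_pos]
  · have succ_eq_zero : t + 1 = 0 := by
      rw [← ZMod.natCast_zmod_val t, ← Nat.cast_succ, wrap, ZMod.natCast_self]
    rw [succ_eq_zero, shiftMask_zero]
    exact (Nat.modEq_zero_iff_dvd.mpr (pow_dvd_pow 2 (by omega))).symm

theorem statement7_general (d W : ℕ) (hW : d < W)
    (select : Set (ZMod (2 ^ d)) → ZMod (2 ^ d)) :
    2 * Nat.card {β : ZMod (2 ^ d) × ZMod W → Bool //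
        β (select {h | onCycle (bstep (2 ^ d) W β) (h, 0)}, 0) = true}
      = 2 ^ (2 ^ d * W) := by
  have : NeZero W := ⟨by omega⟩
  let twist := (xorTwist_involutive (d := d) (W := W) shiftMask (decide <| · = 0)).toPerm
  rw [two_mul_natCard_eq_true_of_flip twist]
  · simp
  intro β
  have cycles_eq : {h | onCycle (bstep (2 ^ d) W (twist β)) (h, 0)} =
      {h | onCycle (bstep (2 ^ d) W β) (h, 0)} :=
    Set.ext <| onCycle_bstep_xorTwist_iff (shiftMask_add_one_modEq hW) shiftMask_zero β
  rw [cycles_eq]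
  simp [twist, xorTwist, xorSlices_eq_self shiftMask_zero]

/-- For `H = 2^d` and `W > d`, the Boolean function of the
`H·W` input bits of the nonmonotone ensemble returning the bit of the
lexicographically smallest vertex of time slice 0 lying on a directed cycle is
exactly balanced. -/
theorem statement7 (d H W : ℕ) (hH : H = 2 ^ d) (hW : d < W) :
    2 * Nat.card {β : ZMod H × ZMod W → Bool // lexCycleBit H W β = true}
      = 2 ^ (H * W) := by
  subst hH
  exact statement7_general d W hW fun C ↦ (sInf {k : ℕ | (k : ZMod (2 ^ d)) ∈ C} : ℕ)
end

section
/- In the nonmonotone ensemble on the wrapped extended butterfly Ω_{H,W} (H = 2^d, W > d), consider the Las Vegas exploration: pick a uniformly random time slice t₀ and, starting from every vertex of slice t₀, follow the unique outgoing edges of the random subgraph forward in time for W steps (paths coalesce when they meet), reading the input bit at every visited vertex. There is a universal constant C such that, for every fixed input bit, the probability that this procedure reads that bit is at most C·(W^{-1}·log H + H^{-1}). -/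
/-!
Started from all of a slice, the set of visited first coordinates is a Markov chain on subsets of
`ZMod H`. Flipping input bits acts on the vertices by exclusive or, so after `t` steps every vertex
is visited with the same probability `ρ t`, the expected density of the visited set. A fixed bit can
only be read after `j` steps from the slice `j` steps before it, so it is read with probability at
most `W⁻¹ * ∑ j < W, ρ j`.

To see that `ρ` decays to `H⁻¹`, give every path its own stream of bits. The map `h ↦ 2h + b` is a
shift register that remembers only the last `d` bits, so two paths meet if their streams differ at
one time and agree at the next `d` times. For the pairs formed by one stream with the others, these
events have probability `2⁻⁽ᵈ⁺¹⁾` each and are pairwise independent or mutually exclusive, so a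
second moment bound shows that a constant fraction of the paths is absorbed:
`ρ (t + L + d) - H⁻¹ ≤ 3/4 * (ρ t - H⁻¹) + 1 / (2L)`. Taking `L` of order `(8/7)ᴷ` in the `K`-th
phase, this phase adds `O(1 + d * (7/8)ᴷ)` to the sum of `ρ t - H⁻¹`. After `O(d)` phases this
quantity is at most `H⁻¹`, and the sum is `O(d) = O(log H)`.
-/

section

open Finset BigOperators

section UniformNoise

variable {α κ B : Type*} [Fintype α] [DecidableEq α] [Fintype κ] [DecidableEq κ]

theorem expect_extend [Fintype B] [Nonempty B] {e : α → κ} (he : Function.Injective e)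
    (Φ : (κ → B) → ℝ) :
    (𝔼 x : κ → B, 𝔼 y : α → B, Φ (Function.extend e y x)) = 𝔼 x : κ → B, Φ x := by
  -- The swap of the coordinates of `x` along `e` with `y` preserves the uniform measure.
  have swap_involutive : Function.Involutive (fun p : (κ → B) × (α → B) =>
      ((Function.extend e p.2 p.1, p.1 ∘ e) : (κ → B) × (α → B))) := by
    rintro ⟨x, y⟩
    ext c
    · by_cases hc : ∃ a, e a = c
      · obtain ⟨a, rfl⟩ := hc
        simp [he.extend_apply]
      · simp [Function.extend_apply' _ _ _ hc]
    · simp [he.extend_apply]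
  calc (𝔼 x : κ → B, 𝔼 y : α → B, Φ (Function.extend e y x))
      = 𝔼 p : (κ → B) × (α → B), Φ (Function.extend e p.2 p.1) := by
        rw [← univ_product_univ, expect_product]
    _ = 𝔼 p : (κ → B) × (α → B), Φ p.1 :=
        Fintype.expect_equiv swap_involutive.toPerm _ _ fun _ => rfl
    _ = 𝔼 x : κ → B, Φ x := by
        rw [← univ_product_univ, expect_product]
        simp only [Fintype.expect_const]

theorem expect_comp_injective [Fintype B] [Nonempty B] {e : α → κ} (he : Function.Injective e)
    (Ψ : (α → B) → ℝ) :
    (𝔼 x : κ → B, Ψ (x ∘ e)) = 𝔼 y : α → B, Ψ y := by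
  rw [← expect_extend he]
  simp only [Function.extend_comp he, Fintype.expect_const]

end UniformNoise

theorem expect_cylinder {α κ : Type*} [Fintype κ] [DecidableEq κ]
    {Q : Finset α} {e : α → κ} (he : Set.InjOn e Q) (c : α → Bool) :
    (𝔼 y : κ → Bool, if ∀ a ∈ Q, y (e a) = c a then (1 : ℝ) else 0) = (1 / 2) ^ #Q := by
  classical
  calc (𝔼 y : κ → Bool, if ∀ a ∈ Q, y (e a) = c a then (1 : ℝ) else 0)
      = 𝔼 y : κ → Bool, if y ∘ Q.restrict e = Q.restrict c then (1 : ℝ) else 0 := by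
        simp only [funext_iff, Function.comp_apply, restrict, Subtype.forall]
    _ = 𝔼 z : Q → Bool, if z = Q.restrict c then (1 : ℝ) else 0 :=
        expect_comp_injective (fun a b h => Subtype.ext (he a.2 b.2 h))
          fun z => if z = Q.restrict c then (1 : ℝ) else 0
    _ = (1 / 2) ^ #Q := by simp

theorem expect_two_cylinders {α κ : Type*} [DecidableEq α] [Fintype κ] [DecidableEq κ]
    {Q R : Finset α} (hQR : Disjoint Q R) {e : α → κ} (he : Set.InjOn e (Q ∪ R : Finset α))
    (c c' : α → Bool) :
    (𝔼 y : κ → Bool,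
      if (∀ a ∈ Q, y (e a) = c a) ∧ ∀ a ∈ R, y (e a) = c' a then (1 : ℝ) else 0)
      = (1 / 2) ^ (#Q + #R) := by
  have union_iff (y : κ → Bool) :
      ((∀ a ∈ Q, y (e a) = c a) ∧ ∀ a ∈ R, y (e a) = c' a) ↔
        ∀ a ∈ Q ∪ R, y (e a) = Q.piecewise c c' a := by
    rw [forall_mem_union]
    refine and_congr (forall₂_congr fun a ha => ?_) (forall₂_congr fun a ha => ?_)
    · rw [piecewise_eq_of_mem Q c c' ha]
    · rw [piecewise_eq_of_notMem Q c c' (disjoint_right.1 hQR ha)]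
  simp only [union_iff]
  rw [expect_cylinder he, card_union_of_disjoint hQR]

theorem expect_count_sq_le {κ Ω : Type*} [Fintype Ω] (P : Finset κ)
    (E : κ → Ω → Prop) [∀ a ω, Decidable (E a ω)] (q : ℝ)
    (hE : ∀ a ∈ P, (𝔼 ω, if E a ω then (1 : ℝ) else 0) = q)
    (hpair : ∀ a ∈ P, ∀ b ∈ P, a ≠ b →
      (𝔼 ω, if E a ω ∧ E b ω then (1 : ℝ) else 0) ≤ q ^ 2) :
    (𝔼 ω, (∑ a ∈ P, if E a ω then (1 : ℝ) else 0) ^ 2) ≤ #P * q + (#P * q) ^ 2 := by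
  classical
  have pair_le (a) (ha : a ∈ P) (b) (hb : b ∈ P) :
      (𝔼 ω, if E a ω ∧ E b ω then (1 : ℝ) else 0) ≤ (if a = b then q else 0) + q ^ 2 := by
    split_ifs with hab
    · subst hab
      simp only [and_self, hE a ha]
      linarith [sq_nonneg q]
    · simpa using hpair a ha b hb hab
  calc (𝔼 ω, (∑ a ∈ P, if E a ω then (1 : ℝ) else 0) ^ 2)
      = ∑ a ∈ P, ∑ b ∈ P, 𝔼 ω, if E a ω ∧ E b ω then (1 : ℝ) else 0 := by
        simp only [sq, sum_mul_sum, expect_sum_comm, ite_zero_mul_ite_zero, mul_one]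
    _ ≤ ∑ a ∈ P, ∑ b ∈ P, ((if a = b then q else 0) + q ^ 2) :=
        sum_le_sum fun a ha => sum_le_sum fun b hb => pair_le a ha b hb
    _ = ∑ a ∈ P, (q + #P * q ^ 2) :=
        sum_congr rfl fun a ha => by simp [sum_add_distrib, ha]
    _ = #P * q + (#P * q) ^ 2 := by
        rw [sum_const, nsmul_eq_mul]
        ring

/-- The states of a dynamical system with update rule `F` that starts at `s` and is driven by the
noise sequence `x`. -/
def drivenOrbit {σ N : Type*} (F : σ → N → σ) (s : σ) (x : ℕ → N) : ℕ → σ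
  | 0 => s
  | t + 1 => F (drivenOrbit F s x t) (x t)

theorem drivenOrbit_congr {σ N : Type*} {F : σ → N → σ} {s : σ} {x y : ℕ → N} {t : ℕ}
    (h : ∀ r < t, x r = y r) : drivenOrbit F s x t = drivenOrbit F s y t := by
  induction t with
  | zero => rfl
  | succ t ih =>
    simp only [drivenOrbit]
    rw [ih fun r hr => h r (hr.trans t.lt_succ_self), h t t.lt_succ_self]

/-- The Markov operator of the random dynamical system whose update rule `F` is driven by
independent uniform noise in `N`: it sends an observable to its expectation after one step. -/
noncomputable def markovOp {σ N : Type*} [Fintype N] (F : σ → N → σ) :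
    Module.End ℝ (σ → ℝ) where
  toFun g s := 𝔼 ν : N, g (F s ν)
  map_add' g g' := by ext s; simp only [Pi.add_apply, expect_add_distrib]
  map_smul' c g := by ext s; simp only [Pi.smul_apply, smul_eq_mul, mul_expect, RingHom.id_apply]

section MarkovOp

variable {σ N : Type*} [Fintype N] (F : σ → N → σ)

theorem markovOp_apply (g : σ → ℝ) (s : σ) : markovOp F g s = 𝔼 ν : N, g (F s ν) := rfl

theorem markovOp_pow_succ_apply (t : ℕ) (g : σ → ℝ) (s : σ) :
    (markovOp F ^ (t + 1)) g s = 𝔼 ν : N, (markovOp F ^ t) g (F s ν) := by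
  rw [pow_succ', Module.End.mul_apply, markovOp_apply]

theorem markovOp_pow_mono (t : ℕ) : Monotone (markovOp F ^ t) := by
  intro g g' h
  induction t with
  | zero => exact h
  | succ t ih =>
    intro s
    simp only [markovOp_pow_succ_apply]
    exact expect_le_expect fun ν _ => ih _

theorem markovOp_pow_const [Nonempty N] (t : ℕ) (c : ℝ) :
    (markovOp F ^ t) (fun _ => c) = fun _ => c := by
  induction t with
  | zero => rfl
  | succ t ih =>
    ext s
    simp only [markovOp_pow_succ_apply, ih, Fintype.expect_const]

theorem markovOp_pow_comp {σ' N' : Type*} [Fintype N'] {F : σ → N → σ} {G : σ' → N' → σ'}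
    {V : Set σ} {φ : σ → σ'} (hV : ∀ s ∈ V, ∀ ν, F s ν ∈ V)
    (hφ : ∀ s ∈ V, ∀ g : σ' → ℝ, (𝔼 ν : N, g (φ (F s ν))) = 𝔼 ν : N', g (G (φ s) ν))
    (t : ℕ) (g : σ' → ℝ) {s : σ} (hs : s ∈ V) :
    (markovOp F ^ t) (g ∘ φ) s = (markovOp G ^ t) g (φ s) := by
  induction t generalizing s with
  | zero => rfl
  | succ t ih =>
    simp only [markovOp_pow_succ_apply, ← hφ s hs]
    exact expect_congr rfl fun ν _ => ih (hV s hs ν)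

end MarkovOp

/-- The noise sequence read off from an array `x` along the times `e 0, e 1, …`. -/
def noiseAlong {ι τ B : Type*} (e : ℕ → τ) (x : ι × τ → B) : ℕ → ι → B :=
  fun t i => x (i, e t)

theorem expect_drivenOrbit {σ ι τ B : Type*} [Fintype ι] [DecidableEq ι] [Fintype τ]
    [DecidableEq τ] [Fintype B] [Nonempty B] (F : σ → (ι → B) → σ) (s : σ) {e : ℕ → τ} {t : ℕ}
    (he : Set.InjOn e (Set.Iio t)) (g : σ → ℝ) :
    (𝔼 x : ι × τ → B, g (drivenOrbit F s (noiseAlong e x) t)) = (markovOp F ^ t) g s := by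
  induction t generalizing g with
  | zero => simp [drivenOrbit]
  | succ t ih =>
    have hslice : Function.Injective fun i : ι => (i, e t) := fun i j h => congrArg Prod.fst h
    rw [pow_succ, Module.End.mul_apply, ← ih (he.mono (Set.Iio_subset_Iio t.le_succ)),
      ← expect_extend hslice]
    refine expect_congr rfl fun x _ => expect_congr rfl fun y _ => ?_
    have past : drivenOrbit F s (noiseAlong e (Function.extend (fun i => (i, e t)) y x)) t
        = drivenOrbit F s (noiseAlong e x) t := by
      refine drivenOrbit_congr fun r hr => funext fun i => Function.extend_apply' _ _ _ ?_
      rintro ⟨k, hk⟩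
      exact hr.ne' (he t.lt_succ_self (hr.trans t.lt_succ_self) (congrArg Prod.snd hk))
    have present : noiseAlong e (Function.extend (fun i => (i, e t)) y x) t = y :=
      funext fun i => hslice.extend_apply y x i
    rw [drivenOrbit, past, present]

/-- The first coordinate `2h + b` reached from `h` in the butterfly by an edge with input bit `b`.
Modulo `2 ^ d` this is a shift register that remembers the last `d` bits. -/
def shiftIn {H : ℕ} (h : ZMod H) (b : Bool) : ZMod H := 2 * h + if b then 1 else 0

theorem drivenOrbit_shiftIn_eq {d s : ℕ} {h k : ZMod (2 ^ d)} {a b : ℕ → Bool}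
    (hab : ∀ r < d, a (s + r) = b (s + r)) :
    drivenOrbit shiftIn h a (s + d) = drivenOrbit shiftIn k b (s + d) := by
  have sub_eq (r : ℕ) (hr : r ≤ d) :
      drivenOrbit shiftIn h a (s + r) - drivenOrbit shiftIn k b (s + r)
        = 2 ^ r * (drivenOrbit shiftIn h a s - drivenOrbit shiftIn k b s) := by
    induction r with
    | zero => simp
    | succ r ih =>
      rw [← add_assoc, drivenOrbit, drivenOrbit, shiftIn, shiftIn, hab r hr, pow_succ]
      linear_combination 2 * ih (Nat.le_of_succ_le hr)
  have two_pow_eq_zero : (2 : ZMod (2 ^ d)) ^ d = 0 := by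
    exact_mod_cast ZMod.natCast_self (2 ^ d)
  rw [← sub_eq_zero, sub_eq d le_rfl, two_pow_eq_zero, zero_mul]

/-- The positions in the next time slice of the paths that currently visit the vertices in `S`,
when `b` holds the input bits of the current slice. -/
def advance {H : ℕ} (S : Finset (ZMod H)) (b : ZMod H → Bool) : Finset (ZMod H) :=
  S.image fun h => shiftIn h (b h)

theorem card_advance_le {H : ℕ} (S : Finset (ZMod H)) (b : ZMod H → Bool) :
    #(advance S b) ≤ #S :=
  card_image_le

section Symmetry

variable {d : ℕ}

/-- Bitwise exclusive or of an element of `ZMod (2 ^ d)` with the `d` lowest bits of `c`. -/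
def xorShift (c : ℕ) (h : ZMod (2 ^ d)) : ZMod (2 ^ d) := (h.val ^^^ c : ℕ)

theorem xorShift_natCast (c n : ℕ) :
    xorShift c (n : ZMod (2 ^ d)) = ((n ^^^ c : ℕ) : ZMod (2 ^ d)) := by
  rw [xorShift, ZMod.natCast_eq_natCast_iff, ZMod.val_natCast, Nat.ModEq, Nat.xor_mod_two_pow,
    Nat.xor_mod_two_pow, Nat.mod_mod]

theorem xorShift_involutive (c : ℕ) : Function.Involutive (xorShift (d := d) c) := by
  intro h
  conv_lhs => rw [← ZMod.natCast_zmod_val h]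
  rw [xorShift_natCast, xorShift_natCast, Nat.xor_assoc, Nat.xor_self, Nat.xor_zero,
    ZMod.natCast_zmod_val]

theorem xorShift_val_zero (v : ZMod (2 ^ d)) : xorShift v.val (0 : ZMod (2 ^ d)) = v := by
  simp [xorShift]

theorem shiftIn_eq_natCast_bit (h : ZMod (2 ^ d)) (b : Bool) :
    shiftIn h b = (Nat.bit b h.val : ℕ) := by
  cases b <;> simp [shiftIn, Nat.bit]

theorem xorShift_shiftIn (c : ℕ) (h : ZMod (2 ^ d)) (b : Bool) :
    xorShift c (shiftIn h b) = shiftIn (xorShift (c / 2) h) (b ^^ c.testBit 0) := by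
  have bit_xor : Nat.bit b h.val ^^^ c = Nat.bit (b ^^ c.testBit 0) (h.val ^^^ (c / 2)) := by
    conv_lhs => rw [← Nat.bit_testBit_zero_shiftRight_one c]
    rw [Nat.xor_bit, Nat.shiftRight_one]
  rw [shiftIn_eq_natCast_bit, xorShift_natCast, bit_xor, xorShift]
  cases b ^^ c.testBit 0 <;> simp [shiftIn, Nat.bit]

theorem image_xorShift_advance (c : ℕ) (S : Finset (ZMod (2 ^ d))) (b : ZMod (2 ^ d) → Bool) :
    (advance S b).image (xorShift c) = advance (S.image (xorShift (c / 2)))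
      fun h => b (xorShift (c / 2) h) ^^ c.testBit 0 := by
  simp only [advance, image_image, Function.comp_def, xorShift_shiftIn, xorShift_involutive _ _]

theorem markovOp_advance_comp_image_xorShift (c : ℕ) (g : Finset (ZMod (2 ^ d)) → ℝ) :
    markovOp advance (g ∘ image (xorShift c))
      = markovOp advance g ∘ image (xorShift (c / 2)) := by
  have flip_involutive : Function.Involutive fun (b : ZMod (2 ^ d) → Bool) h =>
      b (xorShift (c / 2) h) ^^ c.testBit 0 := by
    intro b
    ext h
    simp [xorShift_involutive (c / 2) h]
  ext S
  refine Fintype.expect_equiv flip_involutive.toPerm _ _ fun b => ?_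
  exact congrArg g (image_xorShift_advance c S b)

theorem markovOp_advance_pow_comp_image_xorShift (t c : ℕ) (g : Finset (ZMod (2 ^ d)) → ℝ) :
    (markovOp advance ^ t) (g ∘ image (xorShift c))
      = (markovOp advance ^ t) g ∘ image (xorShift (c / 2 ^ t)) := by
  induction t generalizing c g with
  | zero => simp
  | succ t ih =>
    simp only [pow_succ (markovOp advance), Module.End.mul_apply]
    rw [markovOp_advance_comp_image_xorShift, ih, Nat.div_div_eq_div_mul, pow_succ' 2 t]

end Symmetry

section Density

variable {d : ℕ}

/-- The expected fraction of a time slice that is still visited `t` steps after paths were started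
at all vertices of a slice, with independent input bits in every slice. -/
noncomputable def density (d t : ℕ) : ℝ :=
  (markovOp advance ^ t) (fun S : Finset (ZMod (2 ^ d)) => (#S : ℝ)) univ / 2 ^ d

theorem density_zero : density d 0 = 1 := by
  simp [density]

theorem density_antitone : Antitone (density d) := by
  refine antitone_nat_of_succ_le fun t => ?_
  simp only [density, pow_succ (markovOp _), Module.End.mul_apply]
  gcongr
  refine markovOp_pow_mono advance t (fun S => ?_) univ
  exact expect_le univ_nonempty fun b _ => Nat.cast_le.2 (card_advance_le S b)

theorem one_le_markovOp_advance_pow_card {H : ℕ} [NeZero H] (t : ℕ) {S : Finset (ZMod H)}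
    (hS : S.Nonempty) : 1 ≤ (markovOp advance ^ t) (fun S => (#S : ℝ)) S := by
  induction t generalizing S with
  | zero => exact Nat.one_le_cast.2 hS.card_pos
  | succ t ih =>
    rw [markovOp_pow_succ_apply]
    exact le_expect univ_nonempty fun b _ => ih (hS.image _)

theorem one_div_le_density (t : ℕ) : 1 / 2 ^ d ≤ density d t :=
  div_le_div_of_nonneg_right (one_le_markovOp_advance_pow_card t univ_nonempty) (by positivity)

theorem expect_mem_eq_density (t : ℕ) (v : ZMod (2 ^ d)) :
    (markovOp advance ^ t) (fun S => if v ∈ S then 1 else 0) univ = density d t := by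
  have eq_zero (u : ZMod (2 ^ d)) :
      (markovOp advance ^ t) (fun S => if u ∈ S then 1 else 0) univ
        = (markovOp advance ^ t) (fun S => if (0 : ZMod (2 ^ d)) ∈ S then 1 else 0) univ := by
    have indicator_comp : (fun S : Finset (ZMod (2 ^ d)) => if u ∈ S then (1 : ℝ) else 0)
        ∘ image (xorShift u.val) = fun S => if 0 ∈ S then 1 else 0 := by
      ext S
      have mem_iff : u ∈ S.image (xorShift u.val) ↔ 0 ∈ S := by
        simpa only [xorShift_val_zero] using
          (xorShift_involutive u.val).injective.mem_finset_image (s := S) (a := 0)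
      simp only [Function.comp_apply, mem_iff]
    rw [← indicator_comp, markovOp_advance_pow_comp_image_xorShift, Function.comp_apply,
      image_univ_of_surjective (xorShift_involutive _).surjective]
  have card_eq_sum : (fun S : Finset (ZMod (2 ^ d)) => (#S : ℝ))
      = ∑ u : ZMod (2 ^ d), fun S => if u ∈ S then (1 : ℝ) else 0 := by
    ext S
    simp
  rw [density, card_eq_sum, map_sum, Finset.sum_apply, sum_congr rfl fun u _ => eq_zero u,
    eq_zero v]
  simp [ZMod.card]

end Density

section FiberMins

variable {ι α : Type*} [LinearOrder ι] [DecidableEq α]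

/-- The labels in `U` that are least among those with the same image under `p`. -/
def fiberMins (U : Finset ι) (p : ι → α) : Finset ι :=
  U.filter fun i => ∀ k ∈ U, k < i → p k ≠ p i

theorem fiberMins_subset (U : Finset ι) (p : ι → α) : fiberMins U p ⊆ U :=
  filter_subset _ _

theorem injOn_fiberMins (U : Finset ι) (p : ι → α) : Set.InjOn p (fiberMins U p) := by
  intro i hi j hj hij
  obtain ⟨hiU, hi_min⟩ := mem_filter.1 hi
  obtain ⟨hjU, hj_min⟩ := mem_filter.1 hj
  rcases lt_trichotomy i j with h | h | h
  · exact (hj_min i hiU h hij).elim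
  · exact h
  · exact (hi_min j hjU h hij.symm).elim

theorem image_fiberMins (U : Finset ι) (p : ι → α) : (fiberMins U p).image p = U.image p := by
  refine (image_subset_image (fiberMins_subset U p)).antisymm fun y hy => ?_
  obtain ⟨i, hi, rfl⟩ := mem_image.1 hy
  obtain ⟨k, hk, hk_min⟩ := (U.filter fun k => p k = p i).exists_minimal ⟨i, by simp [hi]⟩
  obtain ⟨hkU, hki⟩ := mem_filter.1 hk
  refine mem_image.2 ⟨k, mem_filter.2 ⟨hkU, fun l hl hlk hpl => ?_⟩, hki⟩
  exact hlk.not_ge (hk_min (mem_filter.2 ⟨hl, hpl.trans hki⟩) hlk.le)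

end FiberMins

/-- Labelled particles on a time slice. Particles keep moving by their own bits even after they
have been absorbed by another particle, and `live` contains the labels not yet absorbed. -/
structure ParticleSystem (ι : Type*) (H : ℕ) where
  pos : ι → ZMod H
  live : Finset ι

namespace ParticleSystem

section Step

variable {ι : Type*} [LinearOrder ι] {H : ℕ}

/-- The set of vertices that carry a live particle. -/
def occupied (P : ParticleSystem ι H) : Finset (ZMod H) := P.live.image P.pos

/-- One time step: every particle moves by its own bit, then among the live particles at the same
vertex the one with the least label absorbs the others. -/
def step (P : ParticleSystem ι H) (b : ι → Bool) : ParticleSystem ι H where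
  pos i := shiftIn (P.pos i) (b i)
  live := fiberMins P.live fun i => shiftIn (P.pos i) (b i)

variable (P : ParticleSystem ι H)

theorem injOn_step (b : ι → Bool) : Set.InjOn (P.step b).pos (P.step b).live :=
  injOn_fiberMins _ _

theorem injOn_drivenOrbit_step {P : ParticleSystem ι H} (hP : Set.InjOn P.pos P.live)
    (x : ℕ → ι → Bool) (t : ℕ) :
    Set.InjOn (drivenOrbit step P x t).pos (drivenOrbit step P x t).live := by
  cases t with
  | zero => exact hP
  | succ t => exact injOn_step _ _

theorem occupied_step (b : ι → Bool) :
    (P.step b).occupied = P.live.image fun i => shiftIn (P.pos i) (b i) :=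
  image_fiberMins _ _

theorem pos_drivenOrbit_step (x : ℕ → ι → Bool) (t : ℕ) (i : ι) :
    (drivenOrbit step P x t).pos i = drivenOrbit shiftIn (P.pos i) (fun n => x n i) t := by
  induction t with
  | zero => rfl
  | succ t ih => simp only [drivenOrbit, step, ih]

theorem live_drivenOrbit_step_antitone (x : ℕ → ι → Bool) :
    Antitone fun t => (drivenOrbit step P x t).live :=
  antitone_nat_of_succ_le fun _ => fiberMins_subset _ _

end Step

section Law

variable {ι : Type*} [LinearOrder ι] [Fintype ι] {H : ℕ} [NeZero H]

theorem expect_occupied_step {P : ParticleSystem ι H} (hP : Set.InjOn P.pos P.live)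
    (g : Finset (ZMod H) → ℝ) :
    (𝔼 b : ι → Bool, g (P.step b).occupied)
      = 𝔼 b : ZMod H → Bool, g (advance P.occupied b) := by
  -- Both sides only involve the bits of the live particles, which sit at distinct vertices.
  let Ψ (z : P.live → Bool) : ℝ := g (univ.image fun i : P.live => shiftIn (P.pos i) (z i))
  have image_univ_live (f : ι → ZMod H) : univ.image (fun i : P.live => f i) = P.live.image f := by
    rw [univ_eq_attach]
    conv_rhs => rw [← attach_image_val (s := P.live), image_image]
    rfl
  calc (𝔼 b : ι → Bool, g (P.step b).occupied)
      = 𝔼 b : ι → Bool, Ψ (b ∘ Subtype.val) := by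
        refine expect_congr rfl fun b _ => congrArg g ?_
        rw [occupied_step, ← image_univ_live]
        rfl
    _ = 𝔼 z : P.live → Bool, Ψ z := expect_comp_injective Subtype.val_injective Ψ
    _ = 𝔼 b : ZMod H → Bool, Ψ (b ∘ P.live.restrict P.pos) :=
        (expect_comp_injective hP.injective Ψ).symm
    _ = 𝔼 b : ZMod H → Bool, g (advance P.occupied b) := by
        refine expect_congr rfl fun b _ => congrArg g ?_
        rw [advance, occupied, image_image, ← image_univ_live]
        rfl

theorem expect_occupied_drivenOrbit {τ : Type*} [Fintype τ] [DecidableEq τ]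
    {P : ParticleSystem ι H} (hP : Set.InjOn P.pos P.live) {e : ℕ → τ} {t : ℕ}
    (he : Set.InjOn e (Set.Iio t)) (g : Finset (ZMod H) → ℝ) :
    (𝔼 x : ι × τ → Bool, g (drivenOrbit step P (noiseAlong e x) t).occupied)
      = (markovOp advance ^ t) g P.occupied := by
  calc (𝔼 x : ι × τ → Bool, g (drivenOrbit step P (noiseAlong e x) t).occupied)
      = (markovOp step ^ t) (g ∘ occupied) P := expect_drivenOrbit step P he (g ∘ occupied)
    _ = (markovOp advance ^ t) g P.occupied :=
        markovOp_pow_comp (V := {Q : ParticleSystem ι H | Set.InjOn Q.pos Q.live})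
          (fun Q _ b => Q.injOn_step b) (fun _ hQ => expect_occupied_step hQ) t g hP

end Law

end ParticleSystem

section Resync

variable {ι : Type*}

/-- The bit streams of `i` and `j` differ at time `s` and agree at the next `d` times. Two paths
driven by these streams then certainly meet, because a position only remembers the last `d` bits. -/
def Resync (d : ℕ) (x : ℕ → ι → Bool) (i j : ι) (s : ℕ) : Prop :=
  ∀ t ∈ Icc s (s + d), (x t i ≠ x t j ↔ t = s)

instance (d : ℕ) (x : ℕ → ι → Bool) (i j : ι) (s : ℕ) : Decidable (Resync d x i j s) :=
  inferInstanceAs (Decidable (∀ t ∈ Icc s (s + d), (x t i ≠ x t j ↔ t = s)))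

theorem resync_comm {d : ℕ} {x : ℕ → ι → Bool} {i j : ι} {s : ℕ} :
    Resync d x i j s ↔ Resync d x j i s := by
  simp only [Resync, ne_comm]

theorem not_resync_self (d : ℕ) (x : ℕ → ι → Bool) (i : ι) (s : ℕ) : ¬ Resync d x i i s :=
  fun h => (h s (by simp)).2 rfl rfl

theorem Resync.ne {d : ℕ} {x : ℕ → ι → Bool} {i j : ι} {s : ℕ} (h : Resync d x i j s) :
    i ≠ j := by
  rintro rfl
  exact not_resync_self d x i s h

theorem Resync.eq_of_le_of_le {d : ℕ} {x : ℕ → ι → Bool} {i j : ι} {s s' : ℕ}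
    (h : Resync d x i j s) (h' : Resync d x i j s') (hs : s' ≤ s + d) (hs' : s ≤ s' + d) :
    s = s' := by
  rcases le_total s s' with hle | hle
  · exact ((h s' (mem_Icc.2 ⟨hle, hs⟩)).1 ((h' s' (by simp)).2 rfl)).symm
  · exact (h' s (mem_Icc.2 ⟨hle, hs'⟩)).1 ((h s (by simp)).2 rfl)

theorem ParticleSystem.notMem_live_of_resync [LinearOrder ι] {d T s : ℕ}
    (P : ParticleSystem ι (2 ^ d)) {x : ℕ → ι → Bool} {i j : ι} (h : Resync d x i j s)
    (hs : s + d < T) (hi : i ∈ (drivenOrbit step P x T).live) :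
    j ∉ (drivenOrbit step P x T).live := by
  intro hj
  have agree (r : ℕ) (hr : r < d) : x (s + 1 + r) i = x (s + 1 + r) j :=
    not_not.1 <| (h (s + 1 + r) (mem_Icc.2 (by omega))).not.2 (by omega)
  have met :
      (drivenOrbit step P x (s + d + 1)).pos i = (drivenOrbit step P x (s + d + 1)).pos j := by
    rw [pos_drivenOrbit_step, pos_drivenOrbit_step, add_right_comm]
    exact drivenOrbit_shiftIn_eq agree
  have live_subset := live_drivenOrbit_step_antitone P x (Nat.succ_le_of_lt hs)
  exact h.ne (injOn_step _ _ (live_subset hi) (live_subset hj) met)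

/-- The array `x` with every stream other than that of `i` replaced by its difference to the stream
of `i`. -/
def relativeTo {τ : Type*} [DecidableEq ι] (i : ι) (x : ι × τ → Bool) : ι × τ → Bool :=
  fun a => if a.1 = i then x a else x (i, a.2) ^^ x a

theorem relativeTo_involutive {τ : Type*} [DecidableEq ι] (i : ι) :
    Function.Involutive (relativeTo (τ := τ) i) := by
  intro x
  ext ⟨j, t⟩
  by_cases hj : j = i <;> simp [relativeTo, hj]

/-- The coordinates that `Resync d x i p.1 p.2` constrains, relative to the stream of `i`. -/
def resyncWindow (d : ℕ) (p : ι × ℕ) : Finset (ι × ℕ) := {p.1} ×ˢ Icc p.2 (p.2 + d)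

theorem card_resyncWindow (d : ℕ) (p : ι × ℕ) : #(resyncWindow d p) = d + 1 := by
  rw [resyncWindow, card_product, card_singleton, Nat.card_Icc]
  omega

theorem resync_noiseAlong_iff {τ : Type*} [DecidableEq ι] {d : ℕ} {e : ℕ → τ} {i : ι}
    {p : ι × ℕ} (hp : p.1 ≠ i) (x : ι × τ → Bool) :
    Resync d (noiseAlong e x) i p.1 p.2 ↔
      ∀ a ∈ resyncWindow d p, relativeTo i x (Prod.map id e a) = decide (a.2 = p.2) := by
  have xor_eq_decide_iff (a b : Bool) (P : Prop) [Decidable P] :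
      (a ^^ b) = decide P ↔ (a ≠ b ↔ P) := by
    cases a <;> cases b <;> simp [eq_comm]
  constructor
  · rintro h ⟨j, t⟩ ha
    obtain ⟨rfl, ht⟩ : j = p.1 ∧ t ∈ Icc p.2 (p.2 + d) := by
      simpa only [resyncWindow, mem_product, mem_singleton] using ha
    simp only [Prod.map_apply, id_eq, relativeTo, if_neg hp, xor_eq_decide_iff]
    exact h t ht
  · intro h t ht
    have := h (p.1, t) (mem_product.2 ⟨mem_singleton_self _, ht⟩)
    simp only [Prod.map_apply, id_eq, relativeTo, if_neg hp, xor_eq_decide_iff] at this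
    exact this

theorem coe_resyncWindow_subset {d T : ℕ} {p : ι × ℕ} (hp : p.2 + d < T) :
    (resyncWindow d p : Set (ι × ℕ)) ⊆ Set.univ ×ˢ Set.Iio T := by
  intro a ha
  have := mem_Icc.1 (mem_product.1 ha).2
  exact ⟨trivial, this.2.trans_lt hp⟩

theorem disjoint_resyncWindow {d : ℕ} {p q : ι × ℕ}
    (h : p.1 = q.1 → p.2 ≤ q.2 + d → q.2 ≤ p.2 + d → False) :
    Disjoint (resyncWindow d p) (resyncWindow d q) := by
  refine disjoint_left.2 fun a ha ha' => ?_
  simp only [resyncWindow, mem_product, mem_singleton, mem_Icc] at ha ha'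
  exact h (ha.1.symm.trans ha'.1) (by omega) (by omega)

/-- The number of times before `L` at which the streams of `i` and `j` resynchronise. -/
def resyncCount (d L : ℕ) (x : ℕ → ι → Bool) (i j : ι) : ℕ := #{s ∈ range L | Resync d x i j s}

theorem resyncCount_comm (L : ℕ) (x : ℕ → ι → Bool) (i j : ι) :
    resyncCount d L x i j = resyncCount d L x j i := by
  simp only [resyncCount, resync_comm (i := i)]

section Moments

variable {τ : Type*} [Fintype ι] [DecidableEq ι] [Fintype τ] [DecidableEq τ] {d T : ℕ}
  {e : ℕ → τ} {i : ι} {p q : ι × ℕ}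

theorem expect_comp_relativeTo (i : ι) (g : (ι × τ → Bool) → ℝ) :
    (𝔼 x, g (relativeTo i x)) = 𝔼 x, g x :=
  Fintype.expect_equiv (relativeTo_involutive i).toPerm _ _ fun _ => rfl

theorem expect_resync (he : Set.InjOn e (Set.Iio T)) (hp : p.1 ≠ i) (hpT : p.2 + d < T) :
    (𝔼 x : ι × τ → Bool, if Resync d (noiseAlong e x) i p.1 p.2 then (1 : ℝ) else 0)
      = (1 / 2) ^ (d + 1) := by
  have injOn : Set.InjOn (Prod.map id e) (resyncWindow d p : Set (ι × ℕ)) :=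
    (Function.injective_id.injOn.prodMap he).mono (coe_resyncWindow_subset hpT)
  simp only [resync_noiseAlong_iff hp]
  rw [expect_comp_relativeTo i fun y =>
      if ∀ a ∈ resyncWindow d p, y (Prod.map id e a) = decide (a.2 = p.2) then (1 : ℝ) else 0,
    expect_cylinder injOn, card_resyncWindow]

theorem expect_resync_and_resync_le (he : Set.InjOn e (Set.Iio T)) (hp : p.1 ≠ i)
    (hpT : p.2 + d < T) (hq : q.1 ≠ i) (hqT : q.2 + d < T) (hpq : p ≠ q) :
    (𝔼 x : ι × τ → Bool, if Resync d (noiseAlong e x) i p.1 p.2 ∧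
        Resync d (noiseAlong e x) i q.1 q.2 then (1 : ℝ) else 0) ≤ ((1 / 2) ^ (d + 1)) ^ 2 := by
  by_cases overlap : p.1 = q.1 ∧ p.2 ≤ q.2 + d ∧ q.2 ≤ p.2 + d
  · have exclusive (x : ι × τ → Bool) : ¬ (Resync d (noiseAlong e x) i p.1 p.2 ∧
        Resync d (noiseAlong e x) i q.1 q.2) := by
      rintro ⟨h, h'⟩
      rw [← overlap.1] at h'
      exact hpq (Prod.ext overlap.1 (h.eq_of_le_of_le h' overlap.2.2 overlap.2.1))
    simp only [exclusive, if_false, expect_const_zero]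
    positivity
  · have disjoint : Disjoint (resyncWindow d p) (resyncWindow d q) :=
      disjoint_resyncWindow fun h h' h'' => overlap ⟨h, h', h''⟩
    have injOn : Set.InjOn (Prod.map id e)
        ((resyncWindow d p ∪ resyncWindow d q : Finset (ι × ℕ)) : Set (ι × ℕ)) := by
      refine ((Function.injective_id.injOn (s := Set.univ)).prodMap he).mono ?_
      rw [coe_union]
      exact Set.union_subset (coe_resyncWindow_subset hpT) (coe_resyncWindow_subset hqT)
    simp only [resync_noiseAlong_iff hp, resync_noiseAlong_iff hq]
    rw [expect_comp_relativeTo i fun y =>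
        if (∀ a ∈ resyncWindow d p, y (Prod.map id e a) = decide (a.2 = p.2)) ∧
          ∀ a ∈ resyncWindow d q, y (Prod.map id e a) = decide (a.2 = q.2) then (1 : ℝ) else 0,
      expect_two_cylinders disjoint injOn, card_resyncWindow, card_resyncWindow, ← pow_mul, mul_two]

theorem sum_resyncCount_eq (L : ℕ) (x : ℕ → ι → Bool) (i : ι) :
    (∑ j, (resyncCount d L x i j : ℝ))
      = ∑ p ∈ univ.erase i ×ˢ range L, if Resync d x i p.1 p.2 then 1 else 0 := by
  have count_self : (resyncCount d L x i i : ℝ) = 0 := by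
    simp [resyncCount, not_resync_self]
  rw [sum_product, ← sum_erase univ (f := fun j => (resyncCount d L x i j : ℝ)) count_self]
  simp only [resyncCount, sum_boole]

/-- The expected number of resynchronisations of one of `m` streams with the others before
time `L`. -/
noncomputable def meanResync (m L d : ℕ) : ℝ := ((m - 1) * L : ℕ) * (1 / 2) ^ (d + 1)

theorem meanResync_nonneg (m L d : ℕ) : 0 ≤ meanResync m L d := by
  unfold meanResync
  positivity

theorem expect_sum_resyncCount {L : ℕ} (he : Set.InjOn e (Set.Iio (L + d))) (i : ι) :
    (𝔼 x : ι × τ → Bool, ∑ j, (resyncCount d L (noiseAlong e x) i j : ℝ))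
      = meanResync (Fintype.card ι) L d := by
  have expect_eq (p) (hp : p ∈ univ.erase i ×ˢ range L) :
      (𝔼 x : ι × τ → Bool, if Resync d (noiseAlong e x) i p.1 p.2 then (1 : ℝ) else 0)
        = (1 / 2) ^ (d + 1) := by
    simp only [mem_product, mem_erase, mem_range] at hp
    exact expect_resync he hp.1.1 (by omega)
  simp only [sum_resyncCount_eq]
  rw [expect_sum_comm, sum_congr rfl expect_eq, sum_const, card_product,
    card_erase_of_mem (mem_univ i), card_univ, card_range, nsmul_eq_mul, meanResync]

theorem expect_sum_resyncCount_sq_le {L : ℕ} (he : Set.InjOn e (Set.Iio (L + d))) (i : ι) :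
    (𝔼 x : ι × τ → Bool, (∑ j, (resyncCount d L (noiseAlong e x) i j : ℝ)) ^ 2)
      ≤ meanResync (Fintype.card ι) L d + meanResync (Fintype.card ι) L d ^ 2 := by
  have card_index : #(univ.erase i ×ˢ range L) = (Fintype.card ι - 1) * L := by
    rw [card_product, card_erase_of_mem (mem_univ i), card_univ, card_range]
  have mem_index {p : ι × ℕ} (hp : p ∈ univ.erase i ×ˢ range L) : p.1 ≠ i ∧ p.2 + d < L + d := by
    simpa using hp
  simp only [sum_resyncCount_eq, meanResync, ← card_index]
  exact expect_count_sq_le _ _ _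
    (fun p hp => expect_resync he (mem_index hp).1 (mem_index hp).2)
    fun p hp q hq hpq => expect_resync_and_resync_le he (mem_index hp).1 (mem_index hp).2
      (mem_index hq).1 (mem_index hq).2 hpq

end Moments

end Resync

section SecondMoment

theorem sum_sum_le_two_mul_sum_sum {ι : Type*} [Fintype ι] {w : ι → ι → ℝ}
    (w_comm : ∀ i j, w i j = w j i) (w_nonneg : ∀ i j, 0 ≤ w i j) {D : Finset ι}
    (hD : ∀ i ∉ D, ∀ j ∉ D, w i j = 0) :
    ∑ i, ∑ j, w i j ≤ 2 * ∑ i ∈ D, ∑ j, w i j := by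
  classical
  have le_add (i j : ι) : w i j ≤ (if i ∈ D then w i j else 0) + if j ∈ D then w j i else 0 := by
    by_cases hi : i ∈ D <;> by_cases hj : j ∈ D <;> simp [hi, hj, w_nonneg, w_comm j i, hD]
  calc ∑ i, ∑ j, w i j
      ≤ ∑ i, ∑ j, ((if i ∈ D then w i j else 0) + if j ∈ D then w j i else 0) :=
        sum_le_sum fun i _ => sum_le_sum fun j _ => le_add i j
    _ = 2 * ∑ i, if i ∈ D then ∑ j, w i j else 0 := by
        simp only [sum_add_distrib]
        rw [sum_comm (f := fun i j => if j ∈ D then w j i else 0), two_mul]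
        simp only [sum_ite_irrel, sum_const_zero]
    _ = 2 * ∑ i ∈ D, ∑ j, w i j := by rw [sum_ite_mem, univ_inter]

theorem sum_sum_le_mul_card_add {ι : Type*} [Fintype ι] {w : ι → ι → ℝ}
    (w_comm : ∀ i j, w i j = w j i) (w_nonneg : ∀ i j, 0 ≤ w i j) {D : Finset ι}
    (hD : ∀ i ∉ D, ∀ j ∉ D, w i j = 0) {α : ℝ} (hα : 0 < α) :
    ∑ i, ∑ j, w i j ≤ α * #D + α⁻¹ * ∑ i, (∑ j, w i j) ^ 2 := by
  have two_mul_le (z : ℝ) : 2 * z ≤ α + α⁻¹ * z ^ 2 := by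
    have : 0 ≤ α⁻¹ * (α - z) ^ 2 := by positivity
    calc 2 * z ≤ 2 * z + α⁻¹ * (α - z) ^ 2 := by linarith
      _ = α + α⁻¹ * z ^ 2 := by field_simp; ring
  calc ∑ i, ∑ j, w i j
      ≤ ∑ i ∈ D, 2 * ∑ j, w i j :=
        (sum_sum_le_two_mul_sum_sum w_comm w_nonneg hD).trans_eq (mul_sum _ _ _)
    _ ≤ ∑ i ∈ D, (α + α⁻¹ * (∑ j, w i j) ^ 2) := sum_le_sum fun i _ => two_mul_le _
    _ = α * #D + α⁻¹ * ∑ i ∈ D, (∑ j, w i j) ^ 2 := by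
        rw [sum_add_distrib, sum_const, nsmul_eq_mul, mul_sum, mul_comm]
    _ ≤ α * #D + α⁻¹ * ∑ i, (∑ j, w i j) ^ 2 := by
        gcongr
        exact subset_univ D

namespace ParticleSystem

variable {ι τ : Type*} [LinearOrder ι] [Fintype ι] [Fintype τ] [DecidableEq τ] {d L : ℕ}
  {e : ℕ → τ}

theorem sum_resyncCount_le (P : ParticleSystem ι (2 ^ d)) (x : ℕ → ι → Bool) {α : ℝ}
    (hα : 0 < α) :
    ∑ i, ∑ j, (resyncCount d L x i j : ℝ)
      ≤ α * #(drivenOrbit step P x (L + d)).liveᶜ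
        + α⁻¹ * ∑ i, (∑ j, (resyncCount d L x i j : ℝ)) ^ 2 := by
  refine sum_sum_le_mul_card_add (fun i j => by rw [resyncCount_comm])
    (fun i j => Nat.cast_nonneg _) (fun i hi j hj => ?_) hα
  rw [notMem_compl] at hi hj
  rw [resyncCount, Nat.cast_eq_zero, card_eq_zero, filter_eq_empty_iff]
  intro s hs h
  have hs := mem_range.1 hs
  exact P.notMem_live_of_resync h (by omega) hi hj

theorem card_mul_meanResync_le (P : ParticleSystem ι (2 ^ d))
    (he : Set.InjOn e (Set.Iio (L + d))) :
    Fintype.card ι * meanResync (Fintype.card ι) L d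
      ≤ 4 * (1 + meanResync (Fintype.card ι) L d)
        * 𝔼 x : ι × τ → Bool, (#(drivenOrbit step P (noiseAlong e x) (L + d)).liveᶜ : ℝ) := by
  set m := Fintype.card ι
  set y := meanResync m L d
  have y_nonneg : 0 ≤ y := meanResync_nonneg m L d
  set α : ℝ := 2 * (1 + y)
  have hα : 0 < α := by positivity
  set E := 𝔼 x : ι × τ → Bool, (#(drivenOrbit step P (noiseAlong e x) (L + d)).liveᶜ : ℝ)
  have expect_le : m * y ≤ α * E + α⁻¹ * (m * (y + y ^ 2)) := by
    calc m * y
        = 𝔼 x : ι × τ → Bool, ∑ i, ∑ j, (resyncCount d L (noiseAlong e x) i j : ℝ) := by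
          rw [expect_sum_comm, sum_congr rfl fun i _ => expect_sum_resyncCount he i, sum_const,
            card_univ, nsmul_eq_mul]
      _ ≤ α * E + α⁻¹ * ∑ i,
            𝔼 x : ι × τ → Bool, (∑ j, (resyncCount d L (noiseAlong e x) i j : ℝ)) ^ 2 := by
          rw [mul_expect, ← expect_sum_comm, mul_expect, ← expect_add_distrib]
          exact expect_le_expect fun x _ => P.sum_resyncCount_le _ hα
      _ ≤ α * E + α⁻¹ * (m * (y + y ^ 2)) := by
          gcongr
          refine (sum_le_sum fun i _ => expect_sum_resyncCount_sq_le he i).trans_eq ?_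
          rw [sum_const, card_univ, nsmul_eq_mul]
  have : α⁻¹ * (m * (y + y ^ 2)) = m * y / 2 := by
    simp only [α]
    field_simp
  linarith

theorem card_sub_le_mul_expect_card_compl_live (P : ParticleSystem ι (2 ^ d)) (hL : 0 < L)
    (he : Set.InjOn e (Set.Iio (L + d))) :
    (Fintype.card ι - 1) - 2 ^ (d + 1) / L
      ≤ 4 * 𝔼 x : ι × τ → Bool, (#(drivenOrbit step P (noiseAlong e x) (L + d)).liveᶜ : ℝ) := by
  have key := P.card_mul_meanResync_le he
  set m := Fintype.card ι
  set y := meanResync m L d with hy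
  have y_nonneg : 0 ≤ y := meanResync_nonneg m L d
  set E := 𝔼 x : ι × τ → Bool, (#(drivenOrbit step P (noiseAlong e x) (L + d)).liveᶜ : ℝ)
  -- The expected number of resynchronisations of one stream with one other stream.
  set μ : ℝ := L / 2 ^ (d + 1) with hμ
  have μ_pos : 0 < μ := div_pos (Nat.cast_pos.2 hL) (by positivity)
  have y_eq : y = (m - 1 : ℕ) * μ := by
    rw [hy, hμ, meanResync, one_div_pow, Nat.cast_mul]
    ring
  have pred_le : (m : ℝ) - 1 ≤ (m - 1 : ℕ) :=
    sub_le_iff_le_add.2 (by exact_mod_cast (le_tsub_add : m ≤ m - 1 + 1))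
  refine le_of_mul_le_mul_left ?_ (by positivity : 0 < 1 + y)
  calc (1 + y) * ((m - 1) - 2 ^ (d + 1) / L)
      ≤ (1 + y) * ((m - 1 : ℕ) - 1 / μ) := by
        rw [hμ, one_div_div]
        gcongr
    _ = (y ^ 2 - 1) / μ := by
        rw [y_eq]
        field_simp
        ring
    _ ≤ y ^ 2 / μ := by gcongr; linarith
    _ = (m - 1 : ℕ) * y := by
        rw [sq, y_eq]
        field_simp
    _ ≤ m * y := by gcongr; exact Nat.sub_le m 1
    _ ≤ (1 + y) * (4 * E) := by linarith

theorem expect_card_live_le (P : ParticleSystem ι (2 ^ d)) (hL : 0 < L)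
    (he : Set.InjOn e (Set.Iio (L + d))) :
    (𝔼 x : ι × τ → Bool, (#(drivenOrbit step P (noiseAlong e x) (L + d)).live : ℝ))
      ≤ Fintype.card ι - ((Fintype.card ι - 1) - 2 ^ (d + 1) / L) / 4 := by
  have card_live (x : ι × τ → Bool) :
      (#(drivenOrbit step P (noiseAlong e x) (L + d)).live : ℝ) = Fintype.card ι
        - #(drivenOrbit step P (noiseAlong e x) (L + d)).liveᶜ := by
    rw [eq_sub_iff_add_eq]
    exact_mod_cast card_add_card_compl _
  simp only [card_live, expect_sub_distrib, Fintype.expect_const]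
  linarith [P.card_sub_le_mul_expect_card_compl_live hL he]

end ParticleSystem

end SecondMoment

section Decay

variable {d : ℕ}

theorem markovOp_advance_pow_card_le {L : ℕ} (hL : 0 < L) (S : Finset (ZMod (2 ^ d))) :
    (markovOp advance ^ (L + d)) (fun S => (#S : ℝ)) S
      ≤ #S - ((#S - 1) - 2 ^ (d + 1) / L) / 4 := by
  have : NeZero (L + d) := ⟨by omega⟩
  let P : ParticleSystem (Fin #S) (2 ^ d) := ⟨Subtype.val ∘ S.equivFin.symm, univ⟩
  have injOn : Set.InjOn P.pos P.live :=
    (Subtype.val_injective.comp S.equivFin.symm.injective).injOn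
  have occupied_eq : P.occupied = S := by
    rw [ParticleSystem.occupied, ← image_image, image_univ_equiv, univ_eq_attach,
      attach_image_val]
  have he : Set.InjOn ((↑) : ℕ → ZMod (L + d)) (Set.Iio (L + d)) :=
    CharP.natCast_injOn_Iio _ _
  have card_occupied (x : Fin #S × ZMod (L + d) → Bool) :
      #(drivenOrbit ParticleSystem.step P (noiseAlong (↑) x) (L + d)).occupied
        = #(drivenOrbit ParticleSystem.step P (noiseAlong (↑) x) (L + d)).live :=
    card_image_of_injOn (ParticleSystem.injOn_drivenOrbit_step injOn _ _)
  rw [← occupied_eq, ← ParticleSystem.expect_occupied_drivenOrbit injOn he, occupied_eq]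
  simp only [card_occupied]
  simpa only [Fintype.card_fin] using P.expect_card_live_le hL he

theorem density_add_le {L : ℕ} (hL : 0 < L) (t : ℕ) :
    density d (t + (L + d)) ≤ 3 / 4 * density d t + 1 / 4 * (1 / 2 ^ d) + 1 / (2 * L) := by
  have card_le : (markovOp advance ^ (L + d)) (fun S : Finset (ZMod (2 ^ d)) => (#S : ℝ))
      ≤ (3 / 4 : ℝ) • (fun S => (#S : ℝ)) + fun _ => (1 + 2 ^ (d + 1) / (L : ℝ)) / 4 := by
    intro S
    have := markovOp_advance_pow_card_le hL S
    simp only [Pi.add_apply, Pi.smul_apply, smul_eq_mul]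
    linarith
  have step := markovOp_pow_mono advance t card_le univ
  rw [map_add, map_smul, markovOp_pow_const, Pi.add_apply, Pi.smul_apply, smul_eq_mul] at step
  rw [density, density, pow_add (markovOp advance) t, Module.End.mul_apply]
  refine (div_le_div_of_nonneg_right step (by positivity)).trans_eq ?_
  have : (L : ℝ) ≠ 0 := Nat.cast_ne_zero.2 hL.ne'
  field_simp
  ring

theorem sum_range_add_le_of_antitone {Q : ℕ → ℝ} (hQ : Antitone Q) (τ n : ℕ) :
    ∑ j ∈ range (τ + n), Q j ≤ ∑ j ∈ range τ, Q j + n * Q τ := by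
  rw [sum_range_add, add_le_add_iff_left]
  simpa only [card_range, nsmul_eq_mul] using
    sum_le_card_nsmul (range n) (fun j => Q (τ + j)) (Q τ) fun j _ => hQ (Nat.le_add_right τ j)

theorem exists_decay_time {Q : ℕ → ℝ} (hQ : Antitone Q) (hQ0 : Q 0 ≤ 1)
    (hrec : ∀ L : ℕ, 0 < L → ∀ t, Q (t + (L + d)) ≤ 3 / 4 * Q t + 1 / (2 * L)) (K : ℕ) :
    ∃ τ, Q τ ≤ (7 / 8) ^ K ∧
      ∑ j ∈ range τ, Q j ≤ 5 * K + 8 * d * (1 - (7 / 8) ^ K) := by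
  induction K with
  | zero => exact ⟨0, by simpa using hQ0, by simp⟩
  | succ K ih =>
    obtain ⟨τ, hτ, hsum⟩ := ih
    rw [pow_succ]
    set r : ℝ := (7 / 8) ^ K
    have hr : 0 < r := by positivity
    have hr1 : r ≤ 1 := pow_le_one₀ (by norm_num) (by norm_num)
    -- A phase of `⌈4 / r⌉ + d` steps costs at most `5 + d * r` and shrinks the bound by `7 / 8`.
    set L := ⌈4 / r⌉₊
    have hL : 0 < L := Nat.ceil_pos.2 (by positivity)
    have le_L : 4 / r ≤ L := Nat.le_ceil _
    have L_le : L * r ≤ 5 := by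
      calc L * r ≤ (4 / r + 1) * r := by
            gcongr
            exact (Nat.ceil_lt_add_one (by positivity)).le
        _ = 4 + r := by field_simp
        _ ≤ 5 := by linarith
    have inv_L_le : 1 / (2 * L) ≤ r / 8 := by
      calc 1 / (2 * (L : ℝ)) ≤ 1 / (2 * (4 / r)) := by gcongr
        _ = r / 8 := by field_simp; norm_num
    refine ⟨τ + (L + d), by linarith [hrec L hL τ], ?_⟩
    calc ∑ j ∈ range (τ + (L + d)), Q j
        ≤ ∑ j ∈ range τ, Q j + (L + d : ℕ) * Q τ := sum_range_add_le_of_antitone hQ _ _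
      _ ≤ (5 * K + 8 * d * (1 - r)) + (L + d : ℕ) * r := by gcongr
      _ ≤ 5 * (K + 1 : ℕ) + 8 * d * (1 - r * (7 / 8)) := by
        push_cast
        linarith

theorem sum_density_le (d W : ℕ) :
    ∑ j ∈ range W, density d j ≤ 38 * d + 2 * (W / 2 ^ d) := by
  let Q (t : ℕ) : ℝ := density d t - 1 / 2 ^ d
  have hQ : Antitone Q := fun s t hst => sub_le_sub_right (density_antitone hst) _
  have hQ0 : Q 0 ≤ 1 := by
    have : (0 : ℝ) ≤ 1 / 2 ^ d := by positivity
    simp only [Q, density_zero]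
    linarith
  have hrec (L : ℕ) (hL : 0 < L) (t : ℕ) : Q (t + (L + d)) ≤ 3 / 4 * Q t + 1 / (2 * L) := by
    have := density_add_le (d := d) hL t
    simp only [Q]
    linarith
  obtain ⟨τ, hτ, hsum⟩ := exists_decay_time hQ hQ0 hrec (6 * d)
  have pow_le : (7 / 8 : ℝ) ^ (6 * d) ≤ 1 / 2 ^ d := by
    rw [pow_mul, ← one_div_pow]
    exact pow_le_pow_left₀ (by norm_num) (by norm_num) d
  calc ∑ j ∈ range W, density d j = ∑ j ∈ range W, Q j + W / 2 ^ d := by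
        simp [Q, div_eq_mul_inv]
    _ ≤ ∑ j ∈ range (τ + W), Q j + W / 2 ^ d := by
        gcongr
        · exact fun j _ _ => sub_nonneg.2 (one_div_le_density j)
        · exact Nat.le_add_left W τ
    _ ≤ (∑ j ∈ range τ, Q j + W * Q τ) + W / 2 ^ d := by
        gcongr
        exact sum_range_add_le_of_antitone hQ τ W
    _ ≤ ((5 * (6 * d : ℕ) + 8 * d * (1 - (7 / 8) ^ (6 * d))) + W * (1 / 2 ^ d)) + W / 2 ^ d := by
        gcongr
        exact hτ.trans pow_le
    _ ≤ 38 * d + 2 * (W / 2 ^ d) := by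
        push_cast
        have : 0 ≤ d * (7 / 8 : ℝ) ^ (6 * d) := by positivity
        linarith [mul_one_div (W : ℝ) (2 ^ d)]

end Decay

section Exploration

variable {d H W : ℕ}

/-- The first coordinates of the vertices reached after `j` steps by the exploration from slice
`t₀`. -/
def reached [NeZero H] (β : ZMod H × ZMod W → Bool) (t₀ : ZMod W) (j : ℕ) : Finset (ZMod H) :=
  drivenOrbit advance univ (noiseAlong (fun n : ℕ => t₀ + n) β) j

theorem iterate_bstep_mem_reached [NeZero H] (β : ZMod H × ZMod W → Bool) (t₀ : ZMod W)
    (u : ZMod H) (j : ℕ) :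
    ((bstep H W β)^[j] (u, t₀)).1 ∈ reached β t₀ j
      ∧ ((bstep H W β)^[j] (u, t₀)).2 = t₀ + j := by
  induction j with
  | zero => simp [reached, drivenOrbit]
  | succ j ih =>
    rw [Function.iterate_succ_apply']
    generalize (bstep H W β)^[j] (u, t₀) = w at ih
    obtain ⟨h, t⟩ := w
    obtain ⟨hh, rfl⟩ : h ∈ reached β t₀ j ∧ t = t₀ + j := ih
    exact ⟨mem_image.2 ⟨h, hh, rfl⟩, by simp [bstep, add_assoc]⟩

theorem expect_mem_reached [NeZero W] (t₀ : ZMod W) {j : ℕ} (hj : j ≤ W) (h : ZMod (2 ^ d)) :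
    (𝔼 β : ZMod (2 ^ d) × ZMod W → Bool, if h ∈ reached β t₀ j then (1 : ℝ) else 0)
      = density d j := by
  have slices_injOn : Set.InjOn (fun n : ℕ => t₀ + n) (Set.Iio j) :=
    (add_right_injective t₀).comp_injOn
      ((CharP.natCast_injOn_Iio (ZMod W) W).mono (Set.Iio_subset_Iio hj))
  exact (expect_drivenOrbit advance univ slices_injOn _).trans (expect_mem_eq_density j h)

theorem card_mem_reached [NeZero W] (t₀ : ZMod W) {j : ℕ} (hj : j ≤ W) (h : ZMod (2 ^ d)) :
    (#{β : ZMod (2 ^ d) × ZMod W → Bool | h ∈ reached β t₀ j} : ℝ)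
      = 2 ^ (2 ^ d * W) * density d j := by
  have card_eq : (Fintype.card (ZMod (2 ^ d) × ZMod W → Bool) : ℝ) = 2 ^ (2 ^ d * W) := by
    simp [ZMod.card]
  rw [← expect_mem_reached t₀ hj h, ← card_eq, Fintype.card_mul_expect, sum_boole]

theorem card_exploration_le [NeZero W] (v : ZMod (2 ^ d) × ZMod W) :
    (Nat.card {p : ZMod W × (ZMod (2 ^ d) × ZMod W → Bool) //
        ∃ u : ZMod (2 ^ d), ∃ j < W, (bstep (2 ^ d) W p.2)^[j] (u, p.1) = v} : ℝ)
      ≤ 2 ^ (2 ^ d * W) * ∑ j ∈ range W, density d j := by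
  classical
  -- Only the start slice `v.2 - j` leads to `v` in `j` steps.
  have subset : univ.filter (fun p : ZMod W × (ZMod (2 ^ d) × ZMod W → Bool) =>
        ∃ u : ZMod (2 ^ d), ∃ j < W, (bstep (2 ^ d) W p.2)^[j] (u, p.1) = v)
      ⊆ (range W).biUnion fun j => {v.2 - (j : ZMod W)} ×ˢ
        univ.filter fun β => v.1 ∈ reached β (v.2 - (j : ZMod W)) j := by
    rintro ⟨t₀, β⟩ hp
    obtain ⟨u, j, hj, rfl⟩ := (mem_filter.1 hp).2
    obtain ⟨mem, slice⟩ := iterate_bstep_mem_reached β t₀ u j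
    have t₀_eq : ((bstep (2 ^ d) W β)^[j] (u, t₀)).2 - j = t₀ := by rw [slice, add_sub_cancel_right]
    simp only [mem_biUnion, mem_range, mem_product, mem_singleton, mem_filter, mem_univ, true_and]
    exact ⟨j, hj, t₀_eq.symm, t₀_eq.symm ▸ mem⟩
  rw [Nat.card_eq_fintype_card, Fintype.card_subtype]
  calc _ ≤ ((∑ j ∈ range W, #({v.2 - (j : ZMod W)} ×ˢ
        univ.filter fun β => v.1 ∈ reached β (v.2 - (j : ZMod W)) j) : ℕ) : ℝ) :=
        Nat.cast_le.2 ((card_le_card subset).trans card_biUnion_le)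
    _ = 2 ^ (2 ^ d * W) * ∑ j ∈ range W, density d j := by
        rw [Nat.cast_sum, mul_sum]
        refine sum_congr rfl fun j hj => ?_
        rw [card_product, card_singleton, one_mul, card_mem_reached _ (mem_range.1 hj).le]

end Exploration

theorem statement8_general (d : ℕ) {W : ℕ} (hW : 0 < W) (v : ZMod (2 ^ d) × ZMod W) :
    (Nat.card {p : ZMod W × (ZMod (2 ^ d) × ZMod W → Bool) //
        ∃ u : ZMod (2 ^ d), ∃ j < W, (bstep (2 ^ d) W p.2)^[j] (u, p.1) = v} : ℝ)
        / ((W : ℝ) * 2 ^ (2 ^ d * W))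
      ≤ 60 * (Real.log (2 ^ d : ℕ) / W + 1 / (2 ^ d : ℕ)) := by
  have : NeZero W := ⟨hW.ne'⟩
  have log_two_ge : 38 ≤ 60 * Real.log 2 := by linarith [Real.log_two_gt_d9]
  have log_eq : Real.log (2 ^ d : ℕ) = d * Real.log 2 := by
    rw [Nat.cast_pow, Real.log_pow, Nat.cast_ofNat]
  rw [div_le_iff₀ (by positivity)]
  calc _ ≤ 2 ^ (2 ^ d * W) * ∑ j ∈ range W, density d j := card_exploration_le v
    _ ≤ 2 ^ (2 ^ d * W) * (d * 38 + 2 * (W / 2 ^ d)) := by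
        gcongr
        linarith [sum_density_le d W]
    _ ≤ 2 ^ (2 ^ d * W) * (d * (60 * Real.log 2) + 60 * (W / 2 ^ d)) := by
        gcongr
        norm_num
    _ = 60 * (Real.log (2 ^ d : ℕ) / W + 1 / (2 ^ d : ℕ)) * (W * 2 ^ (2 ^ d * W)) := by
        rw [log_eq]
        push_cast
        field_simp

end

/-- In the nonmonotone ensemble on `Ω_{H,W}` (`H = 2^d`,
`W > d`), the Las Vegas exploration picks a uniformly random time slice `t₀` and
follows the paths from all vertices of slice `t₀` forward for `W` steps, reading
the bit of every visited vertex.  There is a universal constant `C` such that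
each fixed input bit is read with probability at most
`C·(W⁻¹·log H + H⁻¹)` (probability over the uniform slice `t₀` and the uniform
input bits `β`). -/
theorem statement8 :
    ∃ C > (0 : ℝ), ∀ d H W : ℕ, H = 2 ^ d → d < W →
      ∀ v : ZMod H × ZMod W,
        (Nat.card {p : ZMod W × (ZMod H × ZMod W → Bool) //
            ∃ u : ZMod H, ∃ j < W, (bstep H W p.2)^[j] (u, p.1) = v} : ℝ)
            / ((W : ℝ) * 2 ^ (H * W))
          ≤ C * (Real.log H / W + 1 / H) := by
  refine ⟨60, by norm_num, ?_⟩
  exact fun d H W hH hdW => hH ▸ statement8_general d (Nat.zero_lt_of_lt hdW)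
end

section
/- In the nonmonotone ensemble on the wrapped extended butterfly Ω_{H,W} with W = H (H = 2^d), let a particle start at a uniformly random vertex and repeatedly follow the unique outgoing edge of the random out-degree-one subgraph, stopping the first time it reaches a vertex it has already visited. There is a universal constant C such that the expected number of distinct vertices visited is at most C·H. -/
/-!
Only the bits read along the trajectory matter, and as long as the trajectory does not repeat a
vertex these bits are fresh; so the number of vertices visited exceeds `k` with the probability
that a walk choosing each edge by a new fair coin makes `k` steps without repetition.  After `W`
steps the trajectory contains a vertex `(q t, t)` of every time slice.  The fresh walk is uniform on
its slice from step `d` on, so among the next `H = 2 ^ d` steps the expected number of visits to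
`{(q t, t)}` is at least `1 / 2`, while from any starting point it is at most `2`: a first visit is
followed by at most `2` more on average.  Hence each block of `H` steps meets the earlier trajectory
with probability at least `(1 / 2) / 3 = 1 / 6`, and the number of steps after the first `W` has a
geometric tail on the scale `H`.
-/

open Finset
open scoped BigOperators

lemma sum_range_mul_pow_div_le {r : ℝ} (hr0 : 0 ≤ r) (hr1 : r < 1) (n m : ℕ) :
    ∑ k ∈ range (n * m), r ^ (k / n) ≤ n / (1 - r) := by
  have blocks : ∑ k ∈ range (n * m), r ^ (k / n) = n * ∑ j ∈ range m, r ^ j := by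
    induction m with
    | zero => simp
    | succ m ih =>
      have block : ∀ i ∈ range n, r ^ ((n * m + i) / n) = r ^ m := fun i hi ↦ by
        have hi : i < n := mem_range.1 hi
        rw [Nat.mul_add_div (Nat.zero_lt_of_lt hi), Nat.div_eq_of_lt hi, add_zero]
      rw [Nat.mul_succ, sum_range_add, ih, sum_congr rfl block, sum_range_succ, mul_add]
      simp
  have geometric : ∑ j ∈ range m, r ^ j ≤ 1 / (1 - r) := by
    simpa only [range_eq_Ico, pow_zero] using geom_sum_Ico_le_of_lt_one (m := 0) (n := m) hr0 hr1
  rw [blocks, div_eq_mul_one_div]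
  gcongr

lemma expect_eq_expect_update {α ι : Type*} [Fintype α] [DecidableEq α] [Fintype ι]
    [Nonempty ι] (x : α) (g : (α → ι) → ℝ) :
    𝔼 β, g β = 𝔼 b, 𝔼 β, g (Function.update β x b) := by
  have swap : Function.Involutive
      fun p : ι × (α → ι) ↦ (p.2 x, Function.update p.2 x p.1) := fun p ↦ by simp
  calc 𝔼 β, g β = 𝔼 _b : ι, 𝔼 β, g β := (Fintype.expect_const _).symm
    _ = 𝔼 p : ι × (α → ι), g p.2 := by rw [← univ_product_univ, expect_product]
    _ = 𝔼 p : ι × (α → ι), g (Function.update p.2 x p.1) :=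
        (Fintype.expect_bijective _ swap.bijective _ _ fun _ ↦ rfl).symm
    _ = 𝔼 b, 𝔼 β, g (Function.update β x b) := by
        rw [← univ_product_univ, expect_product]

namespace RandomMap

variable {α ι : Type*}

section Trajectory

/-- The `k` successive images of `x` under the map `f` are pairwise distinct and lie outside `A`.
The set `A` is the part of the trajectory visited so far. -/
def SelfAvoiding (f : α → α) : ℕ → Set α → α → Prop
  | 0, _, _ => True
  | k + 1, A, x => f x ∉ A ∧ SelfAvoiding f k (insert (f x) A) (f x)

lemma SelfAvoiding.congr {f g : α → α} {k : ℕ} {A : Set α} {x : α}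
    (hx : f x = g x) (hA : Set.EqOn f g Aᶜ) :
    SelfAvoiding f k A x ↔ SelfAvoiding g k A x := by
  induction k generalizing A x with
  | zero => rfl
  | succ k ih =>
    simp only [SelfAvoiding, ← hx]
    refine and_congr_right fun hfx ↦ ih (hA hfx) (hA.mono ?_)
    exact Set.compl_subset_compl.2 (Set.subset_insert _ _)

lemma exists_mapsTo_of_not_selfAvoiding {f : α → α} {k : ℕ} {A : Set α} {x : α}
    (hA : ∀ a ∈ A, a ≠ x → f a ∈ A) (h : ¬SelfAvoiding f k A x) :
    ∃ B, A ⊆ B ∧ Set.MapsTo f B B ∧ B.ncard < A.ncard + k := by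
  induction k generalizing A x with
  | zero => exact absurd trivial h
  | succ k ih =>
    by_cases hfx : f x ∈ A
    · refine ⟨A, subset_rfl, fun a ha ↦ ?_, by omega⟩
      by_cases hax : a = x
      · exact hax ▸ hfx
      · exact hA a ha hax
    · have closed : ∀ a ∈ insert (f x) A, a ≠ f x → f a ∈ insert (f x) A := by
        rintro a (rfl | ha) hafx
        · exact absurd rfl hafx
        · by_cases hax : a = x
          · exact hax ▸ Set.mem_insert _ _
          · exact Set.mem_insert_of_mem _ (hA a ha hax)
      obtain ⟨B, hAB, hB, hcard⟩ := ih closed fun h' ↦ h ⟨hfx, h'⟩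
      have := Set.ncard_insert_le (f x) A
      exact ⟨B, (Set.subset_insert _ _).trans hAB, hB, by omega⟩

lemma selfAvoiding_of_lt_ncard_orbit [Finite α] {f : α → α} {v : α} {k : ℕ}
    (hk : k < (Set.range (f^[·] v)).ncard) : SelfAvoiding f k {v} v := by
  by_contra h
  obtain ⟨B, hvB, hB, hcard⟩ := exists_mapsTo_of_not_selfAvoiding (by simp) h
  have orbit_subset : Set.range (f^[·] v) ⊆ B :=
    Set.range_subset_iff.2 fun j ↦ hB.iterate j (hvB rfl)
  have := Set.ncard_le_ncard orbit_subset
  rw [Set.ncard_singleton] at hcard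
  omega

open Classical in
lemma ncard_orbit_le_sum [Finite α] (f : α → α) (v : α) {N : ℕ} (hN : Nat.card α ≤ N) :
    ((Set.range (f^[·] v)).ncard : ℝ) ≤
      ∑ k ∈ range N, if SelfAvoiding f k {v} v then 1 else 0 := by
  have orbit_le : (Set.range (f^[·] v)).ncard ≤ N := (Set.ncard_le_card _).trans hN
  rw [sum_boole]
  have subset : range (Set.range (f^[·] v)).ncard ⊆
      {k ∈ range N | SelfAvoiding f k {v} v} := fun k hk ↦ by
    have hk := mem_range.1 hk
    exact mem_filter.2 ⟨mem_range.2 (hk.trans_le orbit_le), selfAvoiding_of_lt_ncard_orbit hk⟩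
  exact_mod_cast (card_range _).symm.trans_le (card_le_card subset)

end Trajectory

variable [Fintype ι] (next : α → ι → α)

/-- The Markov operator of the walk on `α` that moves from `x` to `next x b`, where the label `b`
is chosen afresh and uniformly at each step. -/
noncomputable def stepMean : Module.End ℝ (α → ℝ) where
  toFun f x := 𝔼 b, f (next x b)
  map_add' _ _ := funext fun _ ↦ expect_add_distrib _ _ _
  map_smul' c _ := funext fun _ ↦ (mul_expect _ _ c).symm

/-- The expected number of the steps `1, …, n` at which the fresh-label walk started at a point is
in `Q`. -/
noncomputable def expectedVisits (Q : Set α) (n : ℕ) : α → ℝ :=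
  ∑ j ∈ range n, (stepMean next ^ (j + 1)) (Q.indicator 1)

/-- The probability that the fresh-label walk started at a point avoids `Q` at the steps
`1, …, n`. -/
noncomputable def avoidProb (Q : Set α) : ℕ → α → ℝ
  | 0 => 1
  | n + 1 => stepMean next (Qᶜ.indicator (avoidProb Q n))

/-- The probability that the positions of the fresh-label walk started at a point at the steps
`1, …, k` are pairwise distinct and lie outside `A`. -/
noncomputable def selfAvoidProb : ℕ → Set α → α → ℝ
  | 0, _ => 1
  | k + 1, A => stepMean next (Aᶜ.indicator fun y ↦ selfAvoidProb k (insert y A) y)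

variable {next}

lemma stepMean_apply (f : α → ℝ) (x : α) : stepMean next f x = 𝔼 b, f (next x b) := rfl

lemma stepMean_mono : Monotone (stepMean next) := fun _ _ hfg _ ↦
  Finset.expect_le_expect fun _ _ ↦ hfg _

lemma stepMean_pow_nonneg {f : α → ℝ} (hf : 0 ≤ f) (j : ℕ) : 0 ≤ (stepMean next ^ j) f := by
  induction j with
  | zero => exact hf
  | succ j ih =>
    rw [pow_succ', Module.End.mul_apply, ← map_zero (stepMean next)]
    exact stepMean_mono ih

lemma expectedVisits_succ (Q : Set α) (n : ℕ) :
    expectedVisits next Q (n + 1) = stepMean next (Q.indicator 1 + expectedVisits next Q n) := by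
  rw [expectedVisits, sum_range_succ', add_comm, expectedVisits, map_add, map_sum, zero_add,
    pow_one]
  simp only [pow_succ' _ (_ + 1), Module.End.mul_apply]

lemma avoidProb_nonneg (Q : Set α) (n : ℕ) : 0 ≤ avoidProb next Q n := by
  induction n with
  | zero => exact zero_le_one
  | succ n ih =>
    rw [avoidProb, ← map_zero (stepMean next)]
    exact stepMean_mono (Set.indicator_nonneg fun x _ ↦ ih x)

section Nonempty

variable [Nonempty ι]

lemma stepMean_const (c : ℝ) : stepMean next (fun _ ↦ c) = fun _ ↦ c :=
  funext fun _ ↦ Fintype.expect_const c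

lemma stepMean_pow_const (j : ℕ) (c : ℝ) : (stepMean next ^ j) (fun _ ↦ c) = fun _ ↦ c := by
  induction j with
  | zero => rfl
  | succ j ih => rw [pow_succ, Module.End.mul_apply, stepMean_const, ih]

lemma avoidProb_le_one (Q : Set α) (n : ℕ) : avoidProb next Q n ≤ 1 := by
  induction n with
  | zero => exact le_rfl
  | succ n ih =>
    rw [avoidProb]
    refine (stepMean_mono fun x ↦ ?_).trans_eq (stepMean_const 1)
    exact Set.indicator_apply_le' (fun _ ↦ ih x) fun _ ↦ zero_le_one' ℝ

/-- A first visit to `Q` is followed by at most `M` further ones on average. -/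
lemma expectedVisits_le_mul_one_sub_avoidProb {Q : Set α} {M : ℝ} {n : ℕ}
    (hM : ∀ i < n, ∀ x, expectedVisits next Q i x ≤ M) (x : α) :
    expectedVisits next Q n x ≤ (1 + M) * (1 - avoidProb next Q n x) := by
  induction n generalizing x with
  | zero => simp [expectedVisits, avoidProb]
  | succ n ih =>
    have step : Q.indicator 1 + expectedVisits next Q n ≤
        (1 + M) • ((fun _ ↦ 1) - Qᶜ.indicator (avoidProb next Q n)) := fun y ↦ by
      by_cases hy : y ∈ Q
      · simpa [hy] using hM n n.lt_succ_self y
      · simpa [hy] using ih (fun i hi ↦ hM i (hi.trans n.lt_succ_self)) y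
    calc expectedVisits next Q (n + 1) x
        = stepMean next (Q.indicator 1 + expectedVisits next Q n) x := by rw [expectedVisits_succ]
      _ ≤ stepMean next ((1 + M) • ((fun _ ↦ 1) - Qᶜ.indicator (avoidProb next Q n))) x :=
          stepMean_mono step x
      _ = (1 + M) * (1 - avoidProb next Q (n + 1) x) := by
          rw [map_smul, map_sub, stepMean_const]; rfl

end Nonempty

lemma avoidProb_add_le {Q : Set α} {m : ℕ} {c : ℝ} (hc : ∀ x, avoidProb next Q m x ≤ c) (n : ℕ) :
    avoidProb next Q (n + m) ≤ c • avoidProb next Q n := by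
  induction n with
  | zero => exact fun x ↦ by simpa [avoidProb] using hc x
  | succ n ih =>
    have smul_indicator : c • Qᶜ.indicator (avoidProb next Q n) =
        Qᶜ.indicator (c • avoidProb next Q n) :=
      funext fun _ ↦ (Set.indicator_const_smul_apply _ c _ _).symm
    rw [Nat.add_right_comm, avoidProb, avoidProb, ← map_smul, smul_indicator]
    exact stepMean_mono (Set.indicator_mono ih)

lemma avoidProb_le_pow_div [Nonempty ι] {Q : Set α} {n : ℕ} {r : ℝ}
    (hr : ∀ x, avoidProb next Q n x ≤ r) (k : ℕ) (x : α) :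
    avoidProb next Q k x ≤ r ^ (k / n) := by
  have r_nonneg : 0 ≤ r := (avoidProb_nonneg Q n x).trans (hr x)
  suffices ∀ i m x, avoidProb next Q (i + n * m) x ≤ r ^ m by
    simpa only [Nat.mod_add_div] using this (k % n) (k / n) x
  intro i m
  induction m with
  | zero => exact avoidProb_le_one Q _
  | succ m ih =>
    intro x
    calc avoidProb next Q (i + n * (m + 1)) x
        = avoidProb next Q (n + (i + n * m)) x := by congr 1; ring
      _ ≤ r ^ m * avoidProb next Q n x := avoidProb_add_le ih n x
      _ ≤ r ^ (m + 1) := by rw [pow_succ]; gcongr; exact hr x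

lemma selfAvoidProb_le_avoidProb {Q A : Set α} (hQA : Q ⊆ A) (k : ℕ) :
    selfAvoidProb next k A ≤ avoidProb next Q k := by
  induction k generalizing A with
  | zero => exact le_rfl
  | succ k ih =>
    refine stepMean_mono ((Set.indicator_mono fun y ↦ ?_).trans
      (Set.indicator_le_indicator_of_subset (Set.compl_subset_compl.2 hQA) (avoidProb_nonneg Q k)))
    exact ih (hQA.trans (Set.subset_insert y A)) y

lemma selfAvoidProb_le_one [Nonempty ι] (k : ℕ) (A : Set α) : selfAvoidProb next k A ≤ 1 :=
  (selfAvoidProb_le_avoidProb (Set.empty_subset A) k).trans (avoidProb_le_one ∅ k)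

open Classical in
/-- Principle of deferred decisions: along a self-avoiding trajectory each label is read at most
once, so the labels may be drawn when they are needed. -/
lemma expect_selfAvoiding [Fintype α] [DecidableEq α] [Nonempty ι] (k : ℕ) {A : Set α} {x : α}
    (hx : x ∈ A) :
    𝔼 β : α → ι, (if SelfAvoiding (fun y ↦ next y (β y)) k A x then (1 : ℝ) else 0) =
      selfAvoidProb next k A x := by
  induction k generalizing A x with
  | zero => simp [SelfAvoiding, selfAvoidProb]
  | succ k ih =>
    rw [expect_eq_expect_update x, selfAvoidProb, stepMean_apply]
    refine expect_congr rfl fun b _ ↦ ?_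
    simp only [SelfAvoiding, Function.update_self]
    by_cases hb : next x b ∈ A
    · simp [hb]
    · have ignores_update (β : α → ι) :
          SelfAvoiding (fun y ↦ next y (Function.update β x b y)) k
            (insert (next x b) A) (next x b) ↔
          SelfAvoiding (fun y ↦ next y (β y)) k (insert (next x b) A) (next x b) := by
        have off_x : ∀ y ≠ x, next y (Function.update β x b y) = next y (β y) := fun y hy ↦ by
          rw [Function.update_of_ne hy]
        exact SelfAvoiding.congr (off_x _ fun h ↦ hb (h.symm ▸ hx))
          fun y hy ↦ off_x y fun h ↦ hy (Set.mem_insert_of_mem _ (h ▸ hx))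
      simp only [hb, not_false_iff, true_and, ignores_update, ih (Set.mem_insert _ A),
        Set.indicator_of_mem (Set.mem_compl hb)]

lemma expect_ncard_orbit_le [Fintype α] [DecidableEq α] [Nonempty ι] (v : α) {N : ℕ}
    (hN : Nat.card α ≤ N) :
    𝔼 β : α → ι, ((Set.range ((fun y ↦ next y (β y))^[·] v)).ncard : ℝ) ≤
      ∑ k ∈ range N, selfAvoidProb next k {v} v := by
  classical
  refine (Finset.expect_le_expect fun β _ ↦ ncard_orbit_le_sum _ v hN).trans_eq ?_
  rw [expect_sum_comm]
  exact sum_congr rfl fun k _ ↦ expect_selfAvoiding k (Set.mem_singleton v)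

end RandomMap

namespace Butterfly

open RandomMap

/-- The two edges out of a vertex of the wrapped extended butterfly `Ω_{H,W}`, labelled by the
parity of the first coordinate of their destination. -/
def next (H W : ℕ) (v : ZMod H × ZMod W) (b : Bool) : ZMod H × ZMod W :=
  (2 * v.1 + (if b then 1 else 0), v.2 + 1)

/-- The set of vertices `(q t, t)`, one in each time slice. -/
def crossSection {H W : ℕ} (q : ZMod W → ZMod H) : Set (ZMod H × ZMod W) := {v | v.1 = q v.2}

variable {d W : ℕ}

lemma indicator_crossSection {H : ℕ} (q : ZMod W → ZMod H) (v : ZMod H × ZMod W) :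
    (crossSection q).indicator (1 : ZMod H × ZMod W → ℝ) v = if v.1 = q v.2 then 1 else 0 := by
  simp only [Set.indicator_apply, crossSection, Set.mem_ofPred_eq, Pi.one_apply]

lemma stepMean_pow_apply {H : ℕ} (f : ZMod H × ZMod W → ℝ) (j : ℕ) (v : ZMod H × ZMod W) :
    (stepMean (next H W) ^ j) f v = 𝔼 b ∈ range (2 ^ j), f (2 ^ j * v.1 + b, v.2 + j) := by
  induction j generalizing v with
  | zero => simp
  | succ j ih =>
    have low_half (b : ℕ) : (2 ^ (j + 1) * v.1 + b, v.2 + (j + 1 : ℕ)) =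
        (2 ^ j * (next H W v false).1 + b, (next H W v false).2 + j) := by
      ext <;> simp [next] <;> ring
    have high_half (b : ℕ) : (2 ^ (j + 1) * v.1 + (2 ^ j + b : ℕ), v.2 + (j + 1 : ℕ)) =
        (2 ^ j * (next H W v true).1 + b, (next H W v true).2 + j) := by
      ext <;> simp [next] <;> ring
    have split : range (2 ^ (j + 1)) = range (2 ^ j + 2 ^ j) := by rw [pow_succ, mul_two]
    rw [pow_succ', Module.End.mul_apply, stepMean_apply, Fintype.expect_eq_sum_div_card,
      Fintype.sum_bool, ih, ih, split]
    simp only [expect_eq_sum_div_card, card_range, sum_range_add, high_half]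
    simp only [low_half]
    push_cast [Fintype.card_bool]
    ring

lemma expect_range_natCast (n : ℕ) [NeZero n] (f : ZMod n → ℝ) :
    𝔼 b ∈ range n, f b = 𝔼 a, f a :=
  expect_nbij' (fun b ↦ (b : ZMod n)) ZMod.val (by simp)
    (fun a _ ↦ mem_range.2 a.val_lt) (fun b hb ↦ ZMod.val_cast_of_lt (mem_range.1 hb))
    (by simp) fun _ _ ↦ rfl

lemma stepMean_pow_self_apply (f : ZMod (2 ^ d) × ZMod W → ℝ) (v : ZMod (2 ^ d) × ZMod W) :
    (stepMean (next (2 ^ d) W) ^ d) f v = 𝔼 a, f (a, v.2 + d) := by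
  have two_pow_eq_zero : (2 ^ d : ZMod (2 ^ d)) = 0 := by
    exact_mod_cast ZMod.natCast_self (2 ^ d)
  simp only [stepMean_pow_apply, two_pow_eq_zero, zero_mul, zero_add]
  exact expect_range_natCast (2 ^ d) fun a ↦ f (a, v.2 + d)

lemma stepMean_pow_indicator_crossSection_le {j : ℕ} (hj : j ≤ d) (q : ZMod W → ZMod (2 ^ d))
    (v : ZMod (2 ^ d) × ZMod W) :
    (stepMean (next (2 ^ d) W) ^ j) ((crossSection q).indicator 1) v ≤ (1 / 2) ^ j := by
  have at_most_one :
      #{b ∈ range (2 ^ j) | 2 ^ j * v.1 + ((b : ℕ) : ZMod (2 ^ d)) = q (v.2 + j)} ≤ 1 := by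
    refine card_le_one.2 fun a ha b hb ↦ ?_
    obtain ⟨⟨ha, haq⟩, hb, hbq⟩ := And.intro (mem_filter.1 ha) (mem_filter.1 hb)
    have hle : range (2 ^ j) ⊆ range (2 ^ d) := range_subset_range.2 (by gcongr; norm_num)
    exact CharP.natCast_injOn_Iio (ZMod (2 ^ d)) (2 ^ d) (mem_range.1 (hle ha))
      (mem_range.1 (hle hb)) (add_left_cancel (haq.trans hbq.symm))
  rw [stepMean_pow_apply, expect_eq_sum_div_card, one_div_pow, card_range]
  simp only [indicator_crossSection, sum_boole]
  push_cast
  gcongr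
  exact_mod_cast at_most_one

lemma stepMean_pow_indicator_crossSection_eq {j : ℕ} (hj : d ≤ j) (q : ZMod W → ZMod (2 ^ d))
    (v : ZMod (2 ^ d) × ZMod W) :
    (stepMean (next (2 ^ d) W) ^ j) ((crossSection q).indicator 1) v = (1 / 2) ^ d := by
  have uniform : (stepMean (next (2 ^ d) W) ^ d) ((crossSection q).indicator 1) =
      fun _ ↦ (1 / 2) ^ d := funext fun v ↦ by
    rw [stepMean_pow_self_apply, Fintype.expect_eq_sum_div_card]
    simp [indicator_crossSection, ZMod.card]
  obtain ⟨i, rfl⟩ := Nat.exists_eq_add_of_le' hj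
  rw [pow_add, Module.End.mul_apply, uniform, stepMean_pow_const]

lemma expectedVisits_crossSection_le {n : ℕ} (hn : n ≤ 2 ^ d) (q : ZMod W → ZMod (2 ^ d))
    (v : ZMod (2 ^ d) × ZMod W) :
    expectedVisits (next (2 ^ d) W) (crossSection q) n v ≤ 2 := by
  have step_le (j : ℕ) : (stepMean (next (2 ^ d) W) ^ (j + 1)) ((crossSection q).indicator 1) v ≤
      (1 / 2) ^ (j + 1) + (1 / 2) ^ d := by
    rcases le_total (j + 1) d with h | h
    · exact (stepMean_pow_indicator_crossSection_le h q v).trans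
        (le_add_of_nonneg_right (by positivity))
    · exact (stepMean_pow_indicator_crossSection_eq h q v).trans_le
        (le_add_of_nonneg_left (by positivity))
  have geometric : ∑ j ∈ range n, (1 / 2 : ℝ) ^ (j + 1) ≤ 1 := by
    have := sum_range_mul_pow_div_le (r := 1 / 2) (by norm_num) (by norm_num) 1 n
    simp only [one_mul, Nat.div_one] at this
    simp only [pow_succ, ← sum_mul]
    linarith
  have hn' : (n : ℝ) * (1 / 2) ^ d ≤ 1 := by
    rw [one_div_pow, mul_one_div, div_le_one (by positivity)]
    exact_mod_cast hn
  calc expectedVisits (next (2 ^ d) W) (crossSection q) n v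
      ≤ ∑ j ∈ range n, ((1 / 2 : ℝ) ^ (j + 1) + (1 / 2) ^ d) := by
        rw [expectedVisits, Finset.sum_apply]
        exact sum_le_sum fun j _ ↦ step_le j
    _ = ∑ j ∈ range n, (1 / 2 : ℝ) ^ (j + 1) + n * (1 / 2) ^ d := by
        rw [sum_add_distrib, sum_const, card_range, nsmul_eq_mul]
    _ ≤ 2 := by linarith

lemma half_le_expectedVisits_crossSection (q : ZMod W → ZMod (2 ^ d))
    (v : ZMod (2 ^ d) × ZMod W) :
    1 / 2 ≤ expectedVisits (next (2 ^ d) W) (crossSection q) (2 ^ d) v := by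
  have h2d : 2 * d ≤ 2 ^ d := Nat.mul_le_pow (by norm_num) d
  have late_steps : (2 : ℝ) ^ d ≤ 2 * (2 ^ d - d : ℕ) := by
    exact_mod_cast (by omega : 2 ^ d ≤ 2 * (2 ^ d - d))
  calc (1 / 2 : ℝ) ≤ (2 ^ d - d : ℕ) * (1 / 2) ^ d := by
        rw [one_div_pow, mul_one_div, div_le_div_iff₀ two_pos (by positivity)]
        linarith
    _ = ∑ _j ∈ Ico d (2 ^ d), (1 / 2 : ℝ) ^ d := by
        rw [sum_const, Nat.card_Ico, nsmul_eq_mul]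
    _ = ∑ j ∈ Ico d (2 ^ d),
          (stepMean (next (2 ^ d) W) ^ (j + 1)) ((crossSection q).indicator 1) v :=
        sum_congr rfl fun j hj ↦ (stepMean_pow_indicator_crossSection_eq
          ((mem_Ico.1 hj).1.trans j.le_succ) q v).symm
    _ ≤ expectedVisits (next (2 ^ d) W) (crossSection q) (2 ^ d) v := by
        rw [expectedVisits, Finset.sum_apply, range_eq_Ico]
        refine sum_le_sum_of_subset_of_nonneg (Ico_subset_Ico_left d.zero_le) fun j _ _ ↦ ?_
        exact stepMean_pow_nonneg (Set.indicator_nonneg fun _ _ ↦ zero_le_one) _ v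

lemma avoidProb_crossSection_le (q : ZMod W → ZMod (2 ^ d)) (v : ZMod (2 ^ d) × ZMod W) :
    avoidProb (next (2 ^ d) W) (crossSection q) (2 ^ d) v ≤ 5 / 6 := by
  have lower := half_le_expectedVisits_crossSection q v
  have upper := expectedVisits_le_mul_one_sub_avoidProb
    (fun i hi ↦ expectedVisits_crossSection_le (le_of_lt hi) q) v
  linarith

lemma selfAvoidProb_le_of_forall_slice {A : Set (ZMod (2 ^ d) × ZMod W)}
    (hA : ∀ t, ∃ h, (h, t) ∈ A) (k : ℕ) (v : ZMod (2 ^ d) × ZMod W) :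
    selfAvoidProb (next (2 ^ d) W) k A v ≤ (5 / 6) ^ (k / 2 ^ d) := by
  choose q hq using hA
  have section_subset : crossSection q ⊆ A := by
    rintro ⟨h, t⟩ (rfl : h = q t)
    exact hq t
  exact (selfAvoidProb_le_avoidProb section_subset k v).trans
    (avoidProb_le_pow_div (avoidProb_crossSection_le q) k v)

/-- A self-avoiding walk of `i` steps from `v` adds a vertex of each of the slices
`v.2 + 1, …, v.2 + i` to the visited set. -/
lemma selfAvoidProb_add_le {H m : ℕ} {c : ℝ} (hc0 : 0 ≤ c)
    (hc : ∀ A v, (∀ t, ∃ h, (h, t) ∈ A) → selfAvoidProb (next H W) m A v ≤ c) (i : ℕ)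
    {A : Set (ZMod H × ZMod W)} {v : ZMod H × ZMod W}
    (hA : ∀ t, (∃ h, (h, t) ∈ A) ∨ ∃ j < i, t = v.2 + (j + 1 : ℕ)) :
    selfAvoidProb (next H W) (i + m) A v ≤ c := by
  induction i generalizing A v with
  | zero => simpa using hc A v fun t ↦ by simpa using hA t
  | succ i ih =>
    rw [Nat.add_right_comm, selfAvoidProb, stepMean_apply]
    refine Finset.expect_le univ_nonempty fun b _ ↦
      Set.indicator_apply_le' (fun _ ↦ ih fun t ↦ ?_) fun _ ↦ hc0
    rcases hA t with ⟨h, hh⟩ | ⟨_ | j, hj, rfl⟩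
    · exact Or.inl ⟨h, Set.mem_insert_of_mem _ hh⟩
    · exact Or.inl ⟨(next H W v b).1, Set.mem_insert_iff.2 (Or.inl (by simp [next]))⟩
    · exact Or.inr ⟨j, by omega, by simp [next]; ring⟩

variable [NeZero W]

lemma selfAvoidProb_singleton_le (k : ℕ) (v : ZMod (2 ^ d) × ZMod W) :
    selfAvoidProb (next (2 ^ d) W) (W + k) {v} v ≤ (5 / 6) ^ (k / 2 ^ d) := by
  refine selfAvoidProb_add_le (by positivity)
    (fun A v hA ↦ selfAvoidProb_le_of_forall_slice hA k v) W fun t ↦ Or.inr ?_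
  exact ⟨(t - v.2 - 1).val, ZMod.val_lt _, by simp⟩

lemma sum_selfAvoidProb_le (v : ZMod (2 ^ d) × ZMod W) (m : ℕ) :
    ∑ k ∈ range (W + 2 ^ d * m), selfAvoidProb (next (2 ^ d) W) k {v} v ≤ W + 6 * 2 ^ d := by
  have first_turn : ∑ k ∈ range W, selfAvoidProb (next (2 ^ d) W) k {v} v ≤ W := by
    simpa using sum_le_card_nsmul (range W) _ 1 fun k _ ↦ selfAvoidProb_le_one k {v} v
  have later : ∑ k ∈ range (2 ^ d * m), selfAvoidProb (next (2 ^ d) W) (W + k) {v} v ≤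
      6 * 2 ^ d :=
    calc _ ≤ ∑ k ∈ range (2 ^ d * m), (5 / 6 : ℝ) ^ (k / 2 ^ d) :=
          sum_le_sum fun k _ ↦ selfAvoidProb_singleton_le k v
      _ ≤ (2 ^ d : ℕ) / (1 - 5 / 6) :=
          sum_range_mul_pow_div_le (by norm_num) (by norm_num) _ m
      _ = 6 * 2 ^ d := by push_cast; ring
  rw [sum_range_add]
  exact add_le_add first_turn later

lemma expect_ncard_orbit_bstep_le (v : ZMod (2 ^ d) × ZMod W) :
    𝔼 β, ((Set.range ((bstep (2 ^ d) W β)^[·] v)).ncard : ℝ) ≤ W + 6 * 2 ^ d := by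
  have card_le : Nat.card (ZMod (2 ^ d) × ZMod W) ≤ W + 2 ^ d * W := by simp
  exact (expect_ncard_orbit_le (next := next (2 ^ d) W) v card_le).trans
    (sum_selfAvoidProb_le v W)

end Butterfly

theorem statement11_general (d H W : ℕ) (hH : H = 2 ^ d) [NeZero H] [NeZero W] :
    (∑ β : ZMod H × ZMod W → Bool, ∑ v : ZMod H × ZMod W,
        (Nat.card {u : ZMod H × ZMod W // ∃ j, (bstep H W β)^[j] v = u} : ℝ))
        / (2 ^ (H * W) * ((H : ℝ) * W))
      ≤ W + 6 * H := by
  subst hH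
  have as_expect (F : (ZMod (2 ^ d) × ZMod W → Bool) → ZMod (2 ^ d) × ZMod W → ℝ) :
      (∑ β, ∑ v, F β v) / (2 ^ (2 ^ d * W) * (((2 ^ d : ℕ) : ℝ) * W)) = 𝔼 v, 𝔼 β, F β v := by
    simp only [Fintype.expect_eq_sum_div_card, ← sum_div, div_div, Fintype.card_fun,
      Fintype.card_bool, Fintype.card_prod, ZMod.card]
    rw [sum_comm]
    push_cast
    rfl
  rw [as_expect]
  push_cast
  exact Finset.expect_le univ_nonempty fun v _ ↦ Butterfly.expect_ncard_orbit_bstep_le v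

/-- In the nonmonotone ensemble on `Ω_{H,W}` with `W = H`
(`H = 2^d`), a particle started at a uniformly random vertex follows the unique
outgoing edges until it revisits a vertex; the set of distinct vertices visited
is exactly the forward orbit of the starting vertex.  There is a universal
constant `C` such that the expected number of distinct vertices visited is at
most `C·H`. -/
theorem statement11 :
    ∃ C > (0 : ℝ), ∀ d H : ℕ, H = 2 ^ d → ∀ _ : NeZero H,
      (∑ β : ZMod H × ZMod H → Bool, ∑ v : ZMod H × ZMod H,
          (Nat.card {u : ZMod H × ZMod H // ∃ j, (bstep H H β)^[j] v = u} : ℝ))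
          / (2 ^ (H * H) * ((H : ℝ) * H))
        ≤ C * H := by
  refine ⟨7, by norm_num, fun d H hH _ ↦ ?_⟩
  linarith [statement11_general d H H hH]
end
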